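/- Let E ⊆ X be a set of finite perimeter. Then there is a constant c > 0 depending only on C_d and C_P such that for 𝓗-a.e. x ∈ ∂*E (that is, for all x in ∂*E outside an 𝓗-null set) one has c ≤ liminf_{r→0} r·P(E,B(x,r))/μ(B(x,r)) ≤ limsup_{r→0} r·P(E,B(x,r))/μ(B(x,r)) ≤ C_d. -/

import Mathlib

open MeasureTheory Metric Filter Set Topology
open scoped NNReal ENNReal

noncomputable section

universe u

/-- The measure `μ` is doubling with constant `Cd`:
`0 < μ(B(x,2r)) ≤ Cd·μ(B(x,r)) < ∞` for every `x` and every `r > 0`. -/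
def IsDoublingWith {X : Type u} [PseudoMetricSpace X] [MeasurableSpace X]
    (μ : Measure X) (Cd : ℝ≥0) : Prop :=
  ∀ (x : X) (r : ℝ), 0 < r →
    0 < μ (ball x (2 * r)) ∧
      μ (ball x (2 * r)) ≤ (Cd : ℝ≥0∞) * μ (ball x r) ∧
      (Cd : ℝ≥0∞) * μ (ball x r) < ⊤

/-- `X` is a geodesic space: any two points are joined by a unit-speed geodesic. -/
def IsGeodesic (X : Type u) [PseudoMetricSpace X] : Prop :=
  ∀ x y : X, ∃ γ : ℝ → X,
    LipschitzOnWith 1 γ (Icc 0 (dist x y)) ∧ γ 0 = x ∧ γ (dist x y) = y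

/-- `g` is an upper gradient of `u`: for every `L ≥ 0` and every `1`-Lipschitz curve
`γ : [0,L] → X`, `|u(γ 0) − u(γ L)| ≤ ∫₀^L g(γ t) dt`. -/
def IsUpperGradientOf {X : Type u} [PseudoMetricSpace X] (g u : X → ℝ) : Prop :=
  ∀ L : ℝ, 0 ≤ L → ∀ γ : ℝ → X, LipschitzOnWith 1 γ (Icc 0 L) →
    |u (γ 0) - u (γ L)| ≤ ∫ t in (0:ℝ)..L, g (γ t)

/-- The lower pointwise Lipschitz constant
`lip u (x) = liminf_{r→0} r⁻¹ sup_{y ∈ B(x,r)} |u y − u x|`. -/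
def lipConst {X : Type u} [PseudoMetricSpace X] (u : X → ℝ) (x : X) : ℝ≥0∞ :=
  Filter.liminf
    (fun r : ℝ => ⨆ y ∈ ball x r, ENNReal.ofReal (|u y - u x| / r)) (𝓝[>] (0:ℝ))

/-- `u` is locally Lipschitz on `W`: Lipschitz on every closed bounded subset of `W`. -/
def LocallyLipschitzOnSet {X : Type u} [PseudoMetricSpace X] (u : X → ℝ) (W : Set X) : Prop :=
  ∀ K : Set X, IsClosed K → Bornology.IsBounded K → K ⊆ W →
    ∃ L : ℝ≥0, LipschitzOnWith L u K

/-- `u i → f` in `L¹_loc(W)`. -/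
def TendstoL1loc {X : Type u} [PseudoMetricSpace X] [MeasurableSpace X]
    (μ : Measure X) (u : ℕ → X → ℝ) (f : X → ℝ) (W : Set X) : Prop :=
  ∀ K : Set X, IsClosed K → Bornology.IsBounded K → K ⊆ W →
    Tendsto (fun i => ∫⁻ x in K, ENNReal.ofReal |u i x - f x| ∂μ) atTop (𝓝 0)

/-- Total variation `V(f,W)` of `f` on an open set `W`:
the infimum over sequences of locally Lipschitz functions converging to `f` in `L¹_loc(W)`
of the liminf of `∫_W lip u_i dμ`. -/
def totVarOn {X : Type u} [PseudoMetricSpace X] [MeasurableSpace X]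
    (μ : Measure X) (f : X → ℝ) (W : Set X) : ℝ≥0∞ :=
  ⨅ (us : ℕ → X → ℝ) (_ : ∀ i, LocallyLipschitzOnSet (us i) W)
    (_ : TendstoL1loc μ us f W),
    Filter.liminf (fun i => ∫⁻ x in W, lipConst (us i) x ∂μ) atTop

/-- Total variation `V(f,A)` of `f` on an arbitrary set `A`:
infimum of `V(f,W)` over open `W ⊇ A`. -/
def totVarSet {X : Type u} [PseudoMetricSpace X] [MeasurableSpace X]
    (μ : Measure X) (f : X → ℝ) (A : Set X) : ℝ≥0∞ :=
  ⨅ (W : Set X) (_ : IsOpen W) (_ : A ⊆ W), totVarOn μ f W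

/-- `f` is of bounded variation: locally integrable and `V(f,X) < ∞`. -/
def IsBV {X : Type u} [MetricSpace X] [MeasurableSpace X]
    (μ : Measure X) (f : X → ℝ) : Prop :=
  LocallyIntegrable f μ ∧ totVarOn μ f Set.univ < ⊤

/-- `(X,d,μ)` supports a `1`-Poincaré inequality with constant `CP`. -/
def SupportsPoincare {X : Type u} [MetricSpace X] [MeasurableSpace X]
    (μ : Measure X) (CP : ℝ) : Prop :=
  ∀ u : X → ℝ, LocallyLipschitzOnSet u Set.univ →
    ∀ g : X → ℝ, (∀ x, 0 ≤ g x) → Measurable g → IsUpperGradientOf g u →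
      ∀ (x : X) (r : ℝ), 0 < r →
        (⨍ y in ball x r, |u y - (⨍ z in ball x r, u z ∂μ)| ∂μ) ≤
          CP * r * (⨍ y in ball x r, g y ∂μ)

/-- Standing assumptions: a complete geodesic metric measure space with at least two
points, whose measure is doubling and supports a 1-Poincaré inequality. -/
def GoodSpace (X : Type u) [MetricSpace X] [MeasurableSpace X]
    (μ : Measure X) (Cd : ℝ≥0) (CP : ℝ) : Prop :=
  Nontrivial X ∧ CompleteSpace X ∧ IsGeodesic X ∧
    IsDoublingWith μ Cd ∧ SupportsPoincare μ CP

/-- The codimension-1 Hausdorff measure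
`𝓗(A) = sup_{δ>0} inf { Σ μ(B_i)/r_i : 0 < r_i ≤ δ, A ⊆ ⋃ B_i }`,
the infimum over countable coverings of `A` by balls (balls of nonpositive radius
are empty and contribute `0`). -/
def codimOneH {X : Type u} [PseudoMetricSpace X] [MeasurableSpace X]
    (μ : Measure X) (A : Set X) : ℝ≥0∞ :=
  ⨆ (δ : ℝ) (_ : 0 < δ),
    ⨅ (c : ℕ → X) (r : ℕ → ℝ) (_ : ∀ i, r i ≤ δ)
      (_ : A ⊆ ⋃ i, ball (c i) (r i)),
      ∑' i, if 0 < r i then μ (ball (c i) (r i)) / ENNReal.ofReal (r i) else 0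

/-- The measure theoretic boundary `∂*E`. -/
def measBdry {X : Type u} [PseudoMetricSpace X] [MeasurableSpace X]
    (μ : Measure X) (E : Set X) : Set X :=
  {x : X |
    0 < Filter.limsup (fun r : ℝ => μ (E ∩ ball x r) / μ (ball x r)) (𝓝[>] (0:ℝ)) ∧
    0 < Filter.limsup (fun r : ℝ => μ (Eᶜ ∩ ball x r) / μ (ball x r)) (𝓝[>] (0:ℝ))}

/-- `A` has density `0` at `x`. -/
def DensityZeroAt {X : Type u} [PseudoMetricSpace X] [MeasurableSpace X]
    (μ : Measure X) (A : Set X) (x : X) : Prop :=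
  Tendsto (fun r : ℝ => μ (A ∩ ball x r) / μ (ball x r)) (𝓝[>] (0:ℝ)) (𝓝 0)

/-- `A` has density `1` at `x`. -/
def DensityOneAt {X : Type u} [PseudoMetricSpace X] [MeasurableSpace X]
    (μ : Measure X) (A : Set X) (x : X) : Prop :=
  Tendsto (fun r : ℝ => μ (A ∩ ball x r) / μ (ball x r)) (𝓝[>] (0:ℝ)) (𝓝 1)

/-- `x` is a Lebesgue point of `u`. -/
def LebesguePointOf {X : Type u} [MetricSpace X] [MeasurableSpace X]
    (μ : Measure X) (u : X → ℝ) (x : X) : Prop :=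
  Tendsto (fun r : ℝ => ⨍ y in ball x r, |u y - u x| ∂μ) (𝓝[>] (0:ℝ)) (𝓝 0)

/-- `u` is a Borel representative whose value at each Lebesgue point equals the limit
of its ball averages. -/
def PreciseRep {X : Type u} [MetricSpace X] [MeasurableSpace X]
    (μ : Measure X) (u : X → ℝ) : Prop :=
  Measurable u ∧ ∀ (x : X) (c : ℝ),
    Tendsto (fun r : ℝ => ⨍ y in ball x r, u y ∂μ) (𝓝[>] (0:ℝ)) (𝓝 c) → u x = c

/-- The restricted maximal function `M_R ν (x) = sup_{0<r≤R} ν(B(x,r))/μ(B(x,r))`. -/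
def restrMaximal {X : Type u} [PseudoMetricSpace X] [MeasurableSpace X]
    (μ ν : Measure X) (R : ℝ) (x : X) : ℝ≥0∞ :=
  ⨆ (r : ℝ) (_ : 0 < r) (_ : r ≤ R), ν (ball x r) / μ (ball x r)

/-- `F_g(x,y)`: the infimum of `∫_γ g ds` over 1-Lipschitz curves `γ : [0,L] → Z`
joining `x` to `y` (the infimum over the empty set is `∞`). -/
def curveInf {Z : Type u} [PseudoMetricSpace Z] (g : Z → ℝ) (x y : Z) : ℝ≥0∞ :=
  ⨅ (L : ℝ) (_ : 0 ≤ L) (γ : ℝ → Z) (_ : LipschitzOnWith 1 γ (Icc 0 L))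
    (_ : γ 0 = x) (_ : γ L = y),
    ∫⁻ t in Icc (0:ℝ) L, ENNReal.ofReal (g (γ t))

/-- Weak-star convergence of measures: test against continuous, compactly
supported functions. -/
def WeakStar {Z : Type u} [MetricSpace Z] [MeasurableSpace Z]
    (ν : ℕ → Measure Z) (m : Measure Z) : Prop :=
  ∀ φ : Z → ℝ, Continuous φ → HasCompactSupport φ →
    Tendsto (fun n => ∫ x, φ x ∂(ν n)) atTop (𝓝 (∫ x, φ x ∂m))

/-- `φ ∈ BV_c(U)`: a BV function whose support is compact and contained in `U`. -/
def MemBVc {X : Type u} [MetricSpace X] [MeasurableSpace X]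
    (μ : Measure X) (φ : X → ℝ) (U : Set X) : Prop :=
  IsBV μ φ ∧ IsCompact (tsupport φ) ∧ tsupport φ ⊆ U

section LipConst

variable {X : Type u} [PseudoMetricSpace X]

lemma lipConst_congr {u v : X → ℝ} {x : X} (h : u =ᶠ[𝓝 x] v) :
    lipConst u x = lipConst v x := by
  obtain ⟨ε, hε, hb⟩ := Metric.eventually_nhds_iff_ball.1 h
  refine liminf_congr ?_
  filter_upwards [Ioo_mem_nhdsGT hε] with r hr
  refine biSup_congr fun y hy => ?_
  rw [hb y (ball_subset_ball hr.2.le hy), hb x (mem_ball_self hε)]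

lemma lipConst_le_of_eventually {u : X → ℝ} {x : X} {L : ℝ}
    (h : ∀ᶠ y in 𝓝 x, |u y - u x| ≤ L * dist y x) (hL : 0 ≤ L) :
    lipConst u x ≤ ENNReal.ofReal L := by
  obtain ⟨ε, hε, hb⟩ := Metric.eventually_nhds_iff_ball.1 h
  refine liminf_le_of_le (by isBoundedDefault) fun b hb' => ?_
  obtain ⟨r, hr1, hr2⟩ := (hb'.and (Ioo_mem_nhdsGT hε)).exists
  refine hr1.trans (iSup₂_le fun y hy => ENNReal.ofReal_le_ofReal ?_)
  rw [div_le_iff₀ hr2.1]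
  exact (hb y (ball_subset_ball hr2.2.le hy)).trans
    (mul_le_mul_of_nonneg_left (mem_ball.1 hy).le hL)

lemma lipConst_mul_le {u θ : X → ℝ} {x : X} {L : ℝ} (hL : 0 ≤ L)
    (h0 : ∀ y, 0 ≤ θ y) (h1 : ∀ y, θ y ≤ 1)
    (h : ∀ᶠ y in 𝓝 x, |θ y - θ x| ≤ L * dist y x) :
    lipConst (fun y => θ y * u y) x ≤ lipConst u x + ENNReal.ofReal L * ENNReal.ofReal |u x| := by
  obtain ⟨ε, hε, hb⟩ := Metric.eventually_nhds_iff_ball.1 h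
  have key : lipConst (fun y => θ y * u y) x ≤ Filter.liminf
      (fun r : ℝ => (⨆ y ∈ ball x r, ENNReal.ofReal (|u y - u x| / r)) +
        ENNReal.ofReal L * ENNReal.ofReal |u x|) (𝓝[>] (0:ℝ)) := by
    refine liminf_le_liminf ?_
    filter_upwards [Ioo_mem_nhdsGT hε] with r hr
    refine iSup₂_le fun y hy => ?_
    refine le_trans ?_ (add_le_add_left (le_iSup₂ (f := fun y (_ : y ∈ ball x r) =>
      ENNReal.ofReal (|u y - u x| / r)) y hy) _)
    rw [← ENNReal.ofReal_mul hL, ← ENNReal.ofReal_add (by have := hr.1; positivity) (by positivity)]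
    refine ENNReal.ofReal_le_ofReal ?_
    rw [div_le_iff₀ hr.1, add_mul, div_mul_cancel₀ _ hr.1.ne']
    have e : θ y * u y - θ x * u x = θ y * (u y - u x) + (θ y - θ x) * u x := by ring
    rw [e]
    refine (abs_add_le _ _).trans (add_le_add ?_ ?_)
    · rw [abs_mul, abs_of_nonneg (h0 y)]
      exact mul_le_of_le_one_left (abs_nonneg _) (h1 y)
    · rw [abs_mul, mul_right_comm]
      refine mul_le_mul_of_nonneg_right ?_ (abs_nonneg _)
      exact (hb y (ball_subset_ball hr.2.le hy)).trans
        (mul_le_mul_of_nonneg_left (mem_ball.1 hy).le hL)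
  refine key.trans ?_
  rw [liminf_add_const _ _ _ (by isBoundedDefault) (by isBoundedDefault)]
  rfl

lemma lipConst_one_sub (u : X → ℝ) (x : X) : lipConst (fun y => 1 - u y) x = lipConst u x := by
  unfold lipConst
  congr 1
  funext r
  refine biSup_congr fun y _ => ?_
  rw [sub_sub_sub_cancel_left, abs_sub_comm]

lemma lipConst_eq_iSup_iInf_rat {u : X → ℝ} (x : X) :
    lipConst u x = ⨆ n : ℕ, ⨅ q : ℚ, ⨅ _ : (0:ℝ) < q ∧ (q:ℝ) < 1 / ((n:ℝ) + 1),
      ⨆ y ∈ ball x (q:ℝ), ENNReal.ofReal (|u y - u x| / (q:ℝ)) := by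
  have hbasis : (𝓝[>] (0:ℝ)).HasBasis (fun _ : ℕ => True)
      (fun n : ℕ => Ioo (0:ℝ) (1 / ((n:ℝ) + 1))) := by
    refine (nhdsGT_basis (0:ℝ)).to_hasBasis (fun ε hε => ?_) (fun n _ => ?_)
    · obtain ⟨n, hn⟩ := exists_nat_one_div_lt hε
      exact ⟨n, trivial, Ioo_subset_Ioo_right hn.le⟩
    · exact ⟨_, by positivity, le_rfl⟩
  rw [lipConst, hbasis.liminf_eq_iSup_iInf]
  simp only [iSup_true]
  refine iSup_congr fun n => le_antisymm ?_ ?_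
  · refine le_iInf₂ fun q hq => iInf₂_le_of_le (q:ℝ) ⟨hq.1, hq.2⟩ le_rfl
  · refine le_iInf₂ fun r hr => ?_
    obtain ⟨q, -, hqr, hq⟩ := Real.exists_seq_rat_strictMono_tendsto r
    set A : ℝ≥0∞ := ⨆ y ∈ ball x r, ENNReal.ofReal (|u y - u x| / r) with hA
    have h1 : Tendsto (fun k => ENNReal.ofReal (r / (q k : ℝ)) * A) atTop (𝓝 A) := by
      have : Tendsto (fun k => r / (q k : ℝ)) atTop (𝓝 (r / r)) :=
        tendsto_const_nhds.div hq hr.1.ne'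
      rw [div_self hr.1.ne'] at this
      have h2 := ENNReal.Tendsto.mul_const (b := A) (ENNReal.tendsto_ofReal this) (by simp)
      simpa using h2
    refine ge_of_tendsto h1 ?_
    filter_upwards [hq.eventually (lt_mem_nhds hr.1)] with k hk
    have hk : (0:ℝ) < q k := hk
    refine iInf₂_le_of_le (q k) ⟨hk, (hqr k).trans hr.2⟩ (iSup₂_le fun y hy => ?_)
    refine le_trans ?_ (mul_le_mul_right (le_iSup₂ (f := fun y (_ : y ∈ ball x r) =>
      ENNReal.ofReal (|u y - u x| / r)) y (ball_subset_ball (hqr k).le hy)) _)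
    rw [← ENNReal.ofReal_mul (div_nonneg hr.1.le hk.le)]
    refine ENNReal.ofReal_le_ofReal (le_of_eq ?_)
    have := hr.1.ne'
    field_simp

lemma lowerSemicontinuous_iSup_ball {u : X → ℝ} (hu : Continuous u) (q : ℝ) :
    LowerSemicontinuous fun x => ⨆ y ∈ ball x q, ENNReal.ofReal (|u y - u x| / q) := by
  intro x a ha
  obtain ⟨y, hy, hay⟩ : ∃ y, ∃ _ : y ∈ ball x q, a < ENNReal.ofReal (|u y - u x| / q) := by
    simpa only [lt_iSup_iff] using ha
  have hc : Continuous fun x => ENNReal.ofReal (|u y - u x| / q) :=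
    ENNReal.continuous_ofReal.comp (by fun_prop)
  have hd : Continuous fun x : X => dist y x := by fun_prop
  filter_upwards [hc.tendsto x |>.eventually_const_lt hay,
    hd.tendsto x |>.eventually_lt_const (mem_ball.1 hy)] with z hz hz'
  exact hz.trans_le (le_iSup₂ (f := fun y (_ : y ∈ ball z q) =>
      ENNReal.ofReal (|u y - u z| / q)) y hz')

lemma measurable_lipConst [MeasurableSpace X] [OpensMeasurableSpace X] {u : X → ℝ}
    (hu : Continuous u) : Measurable (lipConst u) := by
  have : lipConst u = fun x => _ := funext fun x => lipConst_eq_iSup_iInf_rat (u := u) x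
  rw [this]
  refine Measurable.iSup fun n => Measurable.iInf fun q => Measurable.iInf fun _ =>
    (lowerSemicontinuous_iSup_ball hu _).measurable

lemma LocallyLipschitzOnSet.exists_lipschitzOnWith_closedBall {u : X → ℝ} {W : Set X}
    (hu : LocallyLipschitzOnSet u W) (hW : IsOpen W) {x : X} (hx : x ∈ W) :
    ∃ ε > 0, ∃ L : ℝ≥0, LipschitzOnWith L u (closedBall x ε) := by
  obtain ⟨ε, hε, hb⟩ := Metric.nhds_basis_closedBall.mem_iff.1 (hW.mem_nhds hx)
  exact ⟨ε, hε, hu _ isClosed_closedBall isBounded_closedBall hb⟩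

lemma LocallyLipschitzOnSet.continuousOn {u : X → ℝ} {W : Set X}
    (hu : LocallyLipschitzOnSet u W) (hW : IsOpen W) : ContinuousOn u W := by
  intro x hx
  obtain ⟨ε, hε, L, hL⟩ := hu.exists_lipschitzOnWith_closedBall hW hx
  exact (hL.continuousOn.continuousAt (closedBall_mem_nhds x hε)).continuousWithinAt

lemma LocallyLipschitzOnSet.continuous {u : X → ℝ}
    (hu : LocallyLipschitzOnSet u univ) : Continuous u :=
  continuousOn_univ.1 (hu.continuousOn isOpen_univ)

lemma LocallyLipschitzOnSet.mono {u : X → ℝ} {V W : Set X}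
    (hu : LocallyLipschitzOnSet u W) (h : V ⊆ W) : LocallyLipschitzOnSet u V :=
  fun K h1 h2 h3 => hu K h1 h2 (h3.trans h)

lemma lipConst_le_of_lipschitzOnWith {u : X → ℝ} {L : ℝ≥0} {s : Set X} {x : X}
    (h : LipschitzOnWith L u s) (hs : s ∈ 𝓝 x) : lipConst u x ≤ L := by
  rw [← ENNReal.ofReal_coe_nnreal]
  refine lipConst_le_of_eventually ?_ L.2
  filter_upwards [hs] with y hy
  simpa [Real.dist_eq] using h.dist_le_mul y hy x (mem_of_mem_nhds hs)

/-- A locally Lipschitz function has a uniform bound for `lipConst` on bounded sets. -/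
lemma LocallyLipschitzOnSet.lipConst_le {u : X → ℝ} (hu : LocallyLipschitzOnSet u univ)
    (x : X) (R : ℝ) : ∃ L : ℝ≥0, ∀ y ∈ ball x R, lipConst u y ≤ L := by
  obtain ⟨L, hL⟩ := hu (closedBall x R) isClosed_closedBall isBounded_closedBall (subset_univ _)
  exact ⟨L, fun y hy => lipConst_le_of_lipschitzOnWith hL
    (mem_of_superset (isOpen_ball.mem_nhds hy) ball_subset_closedBall)⟩

lemma abs_deriv_le_lipConst {u : X → ℝ} (hu : Continuous u) {γ : ℝ → X}
    (hγ : LipschitzWith 1 γ) {t f' : ℝ} (hd : HasDerivAt (fun s => u (γ s)) f' t) :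
    ENNReal.ofReal |f'| ≤ lipConst u (γ t) := by
  have h1 : Tendsto (fun r : ℝ => ENNReal.ofReal |r⁻¹ • (u (γ (t + r)) - u (γ t))|) (𝓝[>] 0)
      (𝓝 (ENNReal.ofReal |f'|)) :=
    ENNReal.tendsto_ofReal ((hd.tendsto_slope_zero_right).abs)
  rw [← h1.liminf_eq]
  refine liminf_le_liminf ?_
  filter_upwards [self_mem_nhdsWithin] with r (hr : 0 < r)
  have hc : Continuous fun s : ℝ => ENNReal.ofReal (|u (γ (t + s)) - u (γ t)| / r) := by
    have := hγ.continuous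
    exact ENNReal.continuous_ofReal.comp (by fun_prop)
  have h2 := (hc.tendsto r).mono_left (nhdsWithin_le_nhds (s := Iio r))
  have e : |r⁻¹ • (u (γ (t + r)) - u (γ t))| = |u (γ (t + r)) - u (γ t)| / r := by
    rw [smul_eq_mul, abs_mul, abs_inv, abs_of_pos hr]; ring
  rw [e]
  refine le_of_tendsto h2 ?_
  filter_upwards [Ioo_mem_nhdsLT hr] with s hs
  refine le_iSup₂ (f := fun y (_ : y ∈ ball (γ t) r) =>
      ENNReal.ofReal (|u y - u (γ t)| / r)) (γ (t + s)) ?_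
  rw [mem_ball]
  refine (hγ.dist_le_mul _ _).trans_lt ?_
  simpa [abs_of_pos hs.1] using hs.2

/-- The lower pointwise Lipschitz constant of a locally Lipschitz function is an
upper gradient. -/
lemma LocallyLipschitzOnSet.isUpperGradientOf_lipConst [MeasurableSpace X] [BorelSpace X]
    {u : X → ℝ} (hu : LocallyLipschitzOnSet u univ) :
    IsUpperGradientOf (fun x => (lipConst u x).toReal) u := by
  intro L hL γ₀ hγ₀
  set γ : ℝ → X := fun t => γ₀ (projIcc 0 L hL t) with hγdef
  have hγ : LipschitzWith 1 γ := by
    have := (hγ₀.to_restrict).comp (LipschitzWith.projIcc hL)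
    rw [mul_one] at this
    exact this
  have hγeq : ∀ t ∈ Icc 0 L, γ t = γ₀ t := fun t ht => by simp [hγdef, projIcc_of_mem hL ht]
  have hu' := hu.continuous
  have hmem : ∀ t ∈ Icc 0 L, γ t ∈ ball (γ 0) (L + 1) := by
    intro t ht
    rw [mem_ball]
    refine (hγ.dist_le_mul _ _).trans_lt ?_
    simp only [NNReal.coe_one, one_mul, Real.dist_eq, sub_zero, abs_of_nonneg ht.1]
    linarith [ht.2]
  obtain ⟨M, hM⟩ := hu.lipConst_le (γ 0) (L + 1)
  obtain ⟨C, hC⟩ := hu (closedBall (γ 0) (L + 1)) isClosed_closedBall isBounded_closedBall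
    (subset_univ _)
  set f : ℝ → ℝ := fun t => u (γ t) with hf
  have hfL : LipschitzOnWith C f (uIcc 0 L) := by
    rw [uIcc_of_le hL]
    have := hC.comp (hγ.lipschitzOnWith (s := Icc 0 L))
      (fun t ht => ball_subset_closedBall (hmem t ht))
    rw [mul_one] at this
    exact this
  have hac := hfL.absolutelyContinuousOnInterval
  have hint := hac.integral_deriv_eq_sub
  have hgm : Measurable fun t => (lipConst u (γ t)).toReal :=
    ((measurable_lipConst hu').comp hγ.continuous.measurable).ennreal_toReal
  have hgi : IntervalIntegrable (fun t => (lipConst u (γ t)).toReal) volume 0 L := by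
    refine (intervalIntegrable_const (c := (M : ℝ))).mono_fun hgm.aestronglyMeasurable ?_
    refine (ae_restrict_iff' measurableSet_uIoc).2 (Eventually.of_forall fun t ht => ?_)
    rw [uIoc_of_le hL] at ht
    have := hM _ (hmem t ⟨ht.1.le, ht.2⟩)
    simp only [Real.norm_eq_abs, ENNReal.abs_toReal, NNReal.abs_eq]
    exact ENNReal.toReal_le_coe_of_le_coe this
  have e1 : |u (γ₀ 0) - u (γ₀ L)| = |∫ t in (0:ℝ)..L, deriv f t| := by
    rw [hint, abs_sub_comm]
    simp only [hf, hγeq 0 ⟨le_rfl, hL⟩, hγeq L ⟨hL, le_rfl⟩]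
  have e2 : ∫ t in (0:ℝ)..L, (lipConst u (γ₀ t)).toReal
      = ∫ t in (0:ℝ)..L, (lipConst u (γ t)).toReal := by
    refine intervalIntegral.integral_congr fun t ht => ?_
    rw [uIcc_of_le hL] at ht
    simp only [hγeq t ht]
  rw [e1, e2]
  refine (intervalIntegral.abs_integral_le_integral_abs hL).trans ?_
  refine intervalIntegral.integral_mono_ae_restrict hL hac.intervalIntegrable_deriv.abs hgi ?_
  refine (ae_restrict_iff' measurableSet_Icc).2 ?_
  filter_upwards [hac.ae_differentiableAt] with t ht htm
  have h1 := abs_deriv_le_lipConst hu' hγ ((ht (by rwa [uIcc_of_le hL])).hasDerivAt)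
  have h2 : lipConst u (γ t) ≠ ⊤ := ne_top_of_le_ne_top ENNReal.coe_ne_top (hM _ (hmem t htm))
  exact (ENNReal.ofReal_le_iff_le_toReal h2).1 h1

end LipConst

section TotalVariation

variable {X : Type u} [PseudoMetricSpace X] [MeasurableSpace X] {μ : Measure X}

lemma TendstoL1loc.mono {us : ℕ → X → ℝ} {f : X → ℝ} {V W : Set X}
    (h : TendstoL1loc μ us f W) (hVW : V ⊆ W) : TendstoL1loc μ us f V :=
  fun K h1 h2 h3 => h K h1 h2 (h3.trans hVW)

lemma totVarOn_mono (f : X → ℝ) {V W : Set X} (h : V ⊆ W) :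
    totVarOn μ f V ≤ totVarOn μ f W := by
  refine le_iInf fun us => le_iInf₂ fun h1 h2 => ?_
  refine iInf_le_of_le us (iInf₂_le_of_le (fun i => (h1 i).mono h) (h2.mono h) ?_)
  exact liminf_le_liminf (Eventually.of_forall fun i => lintegral_mono_set h)

lemma _root_.ENNReal.liminf_add_liminf_le (a b : ℕ → ℝ≥0∞) :
    liminf a atTop + liminf b atTop ≤ liminf (fun n => a n + b n) atTop := by
  rw [liminf_eq_iSup_iInf_of_nat, liminf_eq_iSup_iInf_of_nat, liminf_eq_iSup_iInf_of_nat,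
    ENNReal.iSup_add_iSup_of_monotone]
  · exact iSup_mono fun n => le_iInf₂ fun i hi => add_le_add (iInf₂_le i hi) (iInf₂_le i hi)
  all_goals exact fun n m hnm => le_iInf₂ fun i hi => iInf₂_le i (hnm.trans hi)

/-- Total variation is superadditive on disjoint open sets. -/
lemma totVarOn_add_le [OpensMeasurableSpace X] (f : X → ℝ) {V W : Set X} (hW : IsOpen W)
    (hd : Disjoint V W) : totVarOn μ f V + totVarOn μ f W ≤ totVarOn μ f (V ∪ W) := by
  refine le_iInf fun us => le_iInf₂ fun h1 h2 => ?_
  have hV' : totVarOn μ f V ≤ liminf (fun i => ∫⁻ x in V, lipConst (us i) x ∂μ) atTop :=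
    iInf_le_of_le us (iInf₂_le_of_le (fun i => (h1 i).mono subset_union_left)
      (h2.mono subset_union_left) le_rfl)
  have hW' : totVarOn μ f W ≤ liminf (fun i => ∫⁻ x in W, lipConst (us i) x ∂μ) atTop :=
    iInf_le_of_le us (iInf₂_le_of_le (fun i => (h1 i).mono subset_union_right)
      (h2.mono subset_union_right) le_rfl)
  refine (add_le_add hV' hW').trans ((ENNReal.liminf_add_liminf_le _ _).trans (le_of_eq ?_))
  congr 1
  funext i
  simp [lintegral_union hW.measurableSet hd]

lemma sum_totVarOn_le [OpensMeasurableSpace X] (f : X → ℝ) {ι : Type*} (s : Finset ι)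
    (V : ι → Set X) (hV : ∀ i ∈ s, IsOpen (V i)) (hd : (s : Set ι).PairwiseDisjoint V) :
    ∑ i ∈ s, totVarOn μ f (V i) ≤ totVarOn μ f (⋃ i ∈ s, V i) := by
  classical
  induction s using Finset.induction_on with
  | empty => simp
  | insert a s ha ih =>
    rw [Finset.sum_insert ha, Finset.set_biUnion_insert]
    refine (add_le_add_right (ih (fun i hi => hV i (Finset.mem_insert_of_mem hi))
      (hd.subset (by simp))) _).trans ?_
    refine totVarOn_add_le f
      (isOpen_biUnion fun i hi => hV i (Finset.mem_insert_of_mem hi)) ?_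
    refine disjoint_iUnion₂_right.2 fun i hi => hd (by simp) (by simp [hi]) ?_
    rintro rfl
    exact ha hi

lemma sum_totVarOn_le_of_subset [OpensMeasurableSpace X] (f : X → ℝ) {ι : Type*} (s : Finset ι)
    (V : ι → Set X) {W : Set X} (hV : ∀ i ∈ s, IsOpen (V i))
    (hd : (s : Set ι).PairwiseDisjoint V) (hW : ∀ i ∈ s, V i ⊆ W) :
    ∑ i ∈ s, totVarOn μ f (V i) ≤ totVarOn μ f W :=
  (sum_totVarOn_le f s V hV hd).trans (totVarOn_mono f (iUnion₂_subset hW))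

lemma tsum_totVarOn_le_of_subset [OpensMeasurableSpace X] (f : X → ℝ) {ι : Type*}
    (V : ι → Set X) {W : Set X} (hV : ∀ i, IsOpen (V i))
    (hd : Pairwise (Function.onFun Disjoint V)) (hW : ∀ i, V i ⊆ W) :
    ∑' i, totVarOn μ f (V i) ≤ totVarOn μ f W := by
  rw [ENNReal.tsum_eq_iSup_sum]
  refine iSup_le fun s => ?_
  exact sum_totVarOn_le_of_subset f s V (fun i _ => hV i) (hd.set_pairwise _) (fun i _ => hW i)

lemma totVarOn_one_sub_le (f : X → ℝ) (W : Set X) :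
    totVarOn μ (fun x => 1 - f x) W ≤ totVarOn μ f W := by
  refine le_iInf fun us => le_iInf₂ fun h1 h2 => ?_
  refine iInf_le_of_le (fun i x => 1 - us i x) (iInf₂_le_of_le (fun i K hK hK' hKW => ?_)
    (fun K hK hK' hKW => ?_) ?_)
  · obtain ⟨L, hL⟩ := h1 i K hK hK' hKW
    refine ⟨L, LipschitzOnWith.of_dist_le_mul fun x hx y hy => ?_⟩
    have := hL.dist_le_mul x hx y hy
    rwa [Real.dist_eq, sub_sub_sub_cancel_left, abs_sub_comm, ← Real.dist_eq]
  · simpa only [sub_sub_sub_cancel_left, abs_sub_comm] using h2 K hK hK' hKW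
  · simp only [lipConst_one_sub, le_refl]

lemma totVarOn_indicator_compl (E W : Set X) :
    totVarOn μ (Eᶜ.indicator fun _ => (1:ℝ)) W = totVarOn μ (E.indicator fun _ => (1:ℝ)) W := by
  have h : ∀ F : Set X, (Fᶜ.indicator fun _ => (1:ℝ)) =
      fun x => 1 - F.indicator (fun _ => (1:ℝ)) x := by
    intro F
    funext x
    by_cases hx : x ∈ F <;> simp [hx]
  refine le_antisymm ?_ ?_
  · rw [h]; exact totVarOn_one_sub_le _ _
  · conv_lhs => rw [← compl_compl E, h]
    exact totVarOn_one_sub_le _ _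

end TotalVariation

section Doubling

variable {X : Type u} [PseudoMetricSpace X] [MeasurableSpace X] {μ : Measure X} {Cd : ℝ≥0}

lemma IsDoublingWith.ball_pos (hd : IsDoublingWith μ Cd) (x : X) {r : ℝ} (hr : 0 < r) :
    0 < μ (ball x r) := by
  have := (hd x (r / 2) (by positivity)).1
  rwa [mul_div_cancel₀ _ two_ne_zero] at this

lemma IsDoublingWith.ball_lt_top (hd : IsDoublingWith μ Cd) (x : X) (r : ℝ) :
    μ (ball x r) < ⊤ := by
  have h : 0 < max r 1 := by positivity
  have h2 := hd x (max r 1 / 2) (by positivity)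
  rw [mul_div_cancel₀ _ two_ne_zero] at h2
  exact (measure_mono (ball_subset_ball (le_max_left _ _))).trans_lt (h2.2.1.trans_lt h2.2.2)

lemma IsDoublingWith.ball_le (hd : IsDoublingWith μ Cd) (x : X) {r : ℝ} (hr : 0 < r) (n : ℕ) :
    μ (ball x (2 ^ n * r)) ≤ (Cd : ℝ≥0∞) ^ n * μ (ball x r) := by
  induction n with
  | zero => simp
  | succ n ih =>
    rw [pow_succ' 2, mul_assoc, pow_succ', mul_assoc]
    exact (hd x _ (by positivity)).2.1.trans (mul_le_mul_right ih _)

lemma IsDoublingWith.ball_le_of_subset (hd : IsDoublingWith μ Cd) {x : X} {r : ℝ} (hr : 0 < r)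
    (n : ℕ) {s : Set X} (hs : s ⊆ ball x (2 ^ n * r)) :
    μ s ≤ (Cd : ℝ≥0∞) ^ n * μ (ball x r) :=
  (measure_mono hs).trans (hd.ball_le x hr n)

lemma IsDoublingWith.isLocallyFiniteMeasure (hd : IsDoublingWith μ Cd) :
    IsLocallyFiniteMeasure μ :=
  ⟨fun x => ⟨ball x 1, ball_mem_nhds x one_pos, hd.ball_lt_top x 1⟩⟩

lemma IsDoublingWith.isUnifLocDoublingMeasure (hd : IsDoublingWith μ Cd) :
    IsUnifLocDoublingMeasure μ := by
  refine ⟨⟨Cd ^ 2, ?_⟩⟩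
  filter_upwards [self_mem_nhdsWithin] with r (hr : 0 < r) x
  rw [ENNReal.coe_pow]
  refine (hd.ball_le_of_subset hr 2 (closedBall_subset_ball (by linarith))).trans
    (mul_le_mul_right (measure_mono ball_subset_closedBall) _)

lemma IsDoublingWith.secondCountableTopology [OpensMeasurableSpace X] (hd : IsDoublingWith μ Cd) :
    SecondCountableTopology X := by
  rcases isEmpty_or_nonempty X with hX | ⟨⟨o⟩⟩
  · infer_instance
  refine Metric.secondCountable_of_almost_dense_set fun ε hε => ?_
  obtain ⟨u, -, hu, hcov⟩ := Vitali.exists_disjoint_subfamily_covering_enlargement_closedBall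
    (univ : Set X) (fun x => x) (fun _ => ε / 5) (ε / 5) (fun _ _ => le_rfl) 5 (by norm_num)
  have : SFinite μ := by
    have hfin : SigmaFinite μ := by
      refine ⟨⟨⟨fun n => ball o n, fun _ => trivial, fun n => hd.ball_lt_top _ _, ?_⟩⟩⟩
      exact iUnion_ball_nat o
    infer_instance
  refine ⟨u, ?_, fun x => ?_⟩
  · have hc := Measure.countable_meas_pos_of_disjoint_iUnion (μ := μ)
      (As := fun i : u => closedBall (i : X) (ε / 5)) (fun i => isClosed_closedBall.measurableSet)
      (fun i j hij => hu i.2 j.2 (Subtype.coe_injective.ne hij))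
    have hall : {i : u | 0 < μ (closedBall (i : X) (ε / 5))} = univ :=
      eq_univ_of_forall fun i => (hd.ball_pos (i : X) (by positivity : 0 < ε / 5)).trans_le
        (measure_mono ball_subset_closedBall)
    rw [hall] at hc
    exact countable_coe_iff.1 (countable_univ_iff.1 hc)
  · obtain ⟨b, hb, hsub⟩ := hcov x (mem_univ x)
    refine ⟨b, hb, ?_⟩
    have := hsub (mem_closedBall_self (by positivity))
    rw [mul_div_cancel₀ _ (by norm_num)] at this
    exact this

end Doubling

section Isoperimetric

/-- The perimeter of `E` in the open set `W`. -/
abbrev perimeterOn {X : Type u} [PseudoMetricSpace X] [MeasurableSpace X]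
    (μ : Measure X) (E W : Set X) : ℝ≥0∞ :=
  totVarOn μ (E.indicator fun _ => (1:ℝ)) W

lemma _root_.LipschitzOnWith.exists_abs_le {X : Type u} [PseudoMetricSpace X] {u : X → ℝ}
    {L : ℝ≥0} {s : Set X} (hu : LipschitzOnWith L u s) (hs : Bornology.IsBounded s) :
    ∃ M : ℝ≥0, ∀ x ∈ s, |u x| ≤ M := by
  rcases s.eq_empty_or_nonempty with rfl | ⟨p, hp⟩
  · exact ⟨0, by simp⟩
  refine ⟨⟨|u p| + L * diam s, by positivity⟩, fun x hx => ?_⟩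
  have h1 := hu.dist_le_mul x hx p hp
  have h2 : (L:ℝ) * dist x p ≤ L * diam s :=
    mul_le_mul_of_nonneg_left (dist_le_diam_of_mem hs hx hp) L.2
  rw [Real.dist_eq] at h1
  have h3 := abs_sub_abs_le_abs_sub (u x) (u p)
  show |u x| ≤ |u p| + L * diam s
  linarith

lemma LocallyLipschitzOnSet.mul_cutoff {X : Type u} [PseudoMetricSpace X] {u θ : X → ℝ}
    {W F : Set X} {L : ℝ≥0} (hu : LocallyLipschitzOnSet u W) (hF : IsClosed F) (hFW : F ⊆ W)
    (hθ : LipschitzWith L θ) (h0 : ∀ x, 0 ≤ θ x) (h1 : ∀ x, θ x ≤ 1) (hθF : ∀ x ∉ F, θ x = 0) :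
    LocallyLipschitzOnSet (fun x => θ x * u x) univ := by
  intro K hK hKb _
  obtain ⟨M, hM⟩ := hu (K ∩ F) (hK.inter hF) (hKb.subset inter_subset_left)
    (inter_subset_right.trans hFW)
  obtain ⟨N, hN⟩ := hM.exists_abs_le (hKb.subset inter_subset_left)
  have hθ' : ∀ x y, |θ x - θ y| ≤ L * dist x y := fun x y => by
    simpa [Real.dist_eq] using hθ.dist_le_mul x y
  have key : ∀ x ∈ K, ∀ y ∈ K, x ∈ F → |θ x * u x - θ y * u y| ≤ (M + N * L) * dist x y := by
    intro x hx y hy hxF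
    have hd : 0 ≤ dist x y := dist_nonneg
    by_cases hyF : y ∈ F
    · have e : θ x * u x - θ y * u y = θ y * (u x - u y) + u x * (θ x - θ y) := by ring
      rw [e, add_mul]
      refine (abs_add_le _ _).trans (add_le_add ?_ ?_)
      · rw [abs_mul, abs_of_nonneg (h0 y)]
        have := hM.dist_le_mul x ⟨hx, hxF⟩ y ⟨hy, hyF⟩
        rw [Real.dist_eq] at this
        exact (mul_le_of_le_one_left (abs_nonneg _) (h1 y)).trans this
      · rw [abs_mul, mul_assoc]
        exact mul_le_mul (hN x ⟨hx, hxF⟩) (hθ' x y) (abs_nonneg _) N.2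
    · have e : θ x * u x - θ y * u y = u x * (θ x - θ y) := by rw [hθF y hyF]; ring
      rw [e, abs_mul, add_mul, mul_assoc (N:ℝ)]
      refine (mul_le_mul (hN x ⟨hx, hxF⟩) (hθ' x y) (abs_nonneg _) N.2).trans ?_
      have : 0 ≤ (M:ℝ) * dist x y := by positivity
      linarith
  refine ⟨M + N * L, LipschitzOnWith.of_dist_le_mul fun x hx y hy => ?_⟩
  push_cast
  rw [Real.dist_eq]
  by_cases hxF : x ∈ F
  · exact key x hx y hy hxF
  by_cases hyF : y ∈ F
  · rw [abs_sub_comm, dist_comm]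
    exact key y hy x hx hyF
  · simp only [hθF x hxF, hθF y hyF, zero_mul, sub_self, abs_zero]
    positivity

lemma min_measure_le_lintegral {X : Type u} [MeasurableSpace X] {μ : Measure X} {E B : Set X}
    (hE : NullMeasurableSet E μ) (hB : MeasurableSet B)
    (a : ℝ) : min (μ (E ∩ B)) (μ (Eᶜ ∩ B)) ≤
      ∫⁻ y in B, ENNReal.ofReal |E.indicator (fun _ => (1:ℝ)) y - a| ∂μ := by
  have hE' : NullMeasurableSet E (μ.restrict B) :=
    hE.mono_ac Measure.restrict_le_self.absolutelyContinuous
  have e : ∀ y, ENNReal.ofReal |E.indicator (fun _ => (1:ℝ)) y - a| =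
      E.indicator (fun _ => ENNReal.ofReal |1 - a|) y +
        Eᶜ.indicator (fun _ => ENNReal.ofReal |a|) y := by
    intro y
    by_cases hy : y ∈ E <;> simp [hy]
  simp_rw [e]
  rw [lintegral_add_left' (aemeasurable_const.indicator₀ hE'), lintegral_indicator_const₀ hE',
    lintegral_indicator_const₀ hE'.compl, Measure.restrict_apply' hB, Measure.restrict_apply' hB]
  have h1 : (1:ℝ≥0∞) ≤ ENNReal.ofReal |1 - a| + ENNReal.ofReal |a| := by
    rw [← ENNReal.ofReal_add (abs_nonneg _) (abs_nonneg _), ← ENNReal.ofReal_one]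
    refine ENNReal.ofReal_le_ofReal ?_
    have := abs_add_le (1 - a) a
    rwa [sub_add_cancel, abs_one] at this
  calc min (μ (E ∩ B)) (μ (Eᶜ ∩ B)) = 1 * min (μ (E ∩ B)) (μ (Eᶜ ∩ B)) := (one_mul _).symm
    _ ≤ (ENNReal.ofReal |1 - a| + ENNReal.ofReal |a|) * min (μ (E ∩ B)) (μ (Eᶜ ∩ B)) := by gcongr
    _ ≤ _ := by
      rw [add_mul]
      exact add_le_add (mul_le_mul_right (min_le_left _ _) _)
        (mul_le_mul_right (min_le_right _ _) _)

variable {X : Type u} [MetricSpace X] [MeasurableSpace X] [BorelSpace X] {μ : Measure X}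
  {Cd : ℝ≥0} {CP : ℝ}

lemma SupportsPoincare.exists_lintegral_le (hP : SupportsPoincare μ CP) (hCP : 0 < CP)
    (hd : IsDoublingWith μ Cd) {v : X → ℝ} (hv : LocallyLipschitzOnSet v univ) (x : X) {s : ℝ}
    (hs : 0 < s) : ∃ a : ℝ, ∫⁻ y in ball x s, ENNReal.ofReal |v y - a| ∂μ ≤
      ENNReal.ofReal (CP * s) * ∫⁻ y in ball x s, lipConst v y ∂μ := by
  have hvc := hv.continuous
  obtain ⟨L, hL⟩ := hv.lipConst_le x s
  obtain ⟨K, hK⟩ := hv (closedBall x s) isClosed_closedBall isBounded_closedBall (subset_univ _)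
  obtain ⟨M, hM⟩ := hK.exists_abs_le isBounded_closedBall
  have hgm : Measurable fun y => (lipConst v y).toReal := (measurable_lipConst hvc).ennreal_toReal
  have h := hP v hv _ (fun y => ENNReal.toReal_nonneg) hgm hv.isUpperGradientOf_lipConst x s hs
  set a := ⨍ z in ball x s, v z ∂μ with ha
  refine ⟨a, ?_⟩
  have hpos : 0 < μ.real (ball x s) :=
    ENNReal.toReal_pos (hd.ball_pos x hs).ne' (hd.ball_lt_top x s).ne
  rw [setAverage_eq, setAverage_eq, smul_eq_mul, smul_eq_mul, mul_left_comm,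
    mul_le_mul_iff_right₀ (inv_pos.2 hpos)] at h
  have hi1 : IntegrableOn (fun y => |v y - a|) (ball x s) μ := by
    refine IntegrableOn.of_bound (hd.ball_lt_top x s) (by fun_prop) (M + |a|) ?_
    refine (ae_restrict_iff' measurableSet_ball).2 (Eventually.of_forall fun y hy => ?_)
    rw [Real.norm_eq_abs, abs_abs]
    exact (abs_sub _ _).trans (add_le_add_left (hM y (ball_subset_closedBall hy)) _)
  have hi2 : IntegrableOn (fun y => (lipConst v y).toReal) (ball x s) μ := by
    refine IntegrableOn.of_bound (hd.ball_lt_top x s) hgm.aestronglyMeasurable L ?_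
    refine (ae_restrict_iff' measurableSet_ball).2 (Eventually.of_forall fun y hy => ?_)
    rw [Real.norm_eq_abs, ENNReal.abs_toReal]
    exact ENNReal.toReal_le_coe_of_le_coe (hL y hy)
  have h' := ENNReal.ofReal_le_ofReal h
  rw [ENNReal.ofReal_mul (by positivity), ofReal_integral_eq_lintegral_ofReal hi1
    (Eventually.of_forall fun y => abs_nonneg _), ofReal_integral_eq_lintegral_ofReal hi2
    (Eventually.of_forall fun y => ENNReal.toReal_nonneg)] at h'
  refine h'.trans (mul_le_mul_right (lintegral_mono fun y => ?_) _)
  exact ENNReal.ofReal_toReal_le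

/-- Relative isoperimetric inequality. -/
lemma min_measure_le_perimeterOn (hP : SupportsPoincare μ CP) (hCP : 0 < CP)
    (hd : IsDoublingWith μ Cd) {E : Set X} (hE : NullMeasurableSet E μ) (x : X) {s : ℝ}
    (hs : 0 < s) : min (μ (E ∩ ball x s)) (μ (Eᶜ ∩ ball x s)) ≤
      ENNReal.ofReal (CP * s) * perimeterOn μ E (ball x (2 * s)) := by
  have hC0 : ENNReal.ofReal (CP * s) ≠ 0 := (ENNReal.ofReal_pos.2 (by positivity)).ne'
  rw [mul_comm, ← ENNReal.div_le_iff hC0 ENNReal.ofReal_ne_top]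
  refine le_iInf fun us => le_iInf₂ fun h1 h2 => ?_
  set θ : X → ℝ := fun y => max 0 (min 1 (3 - 2 / s * dist y x)) with hθ
  have hθ0 : ∀ y, 0 ≤ θ y := fun y => le_max_left _ _
  have hθ1 : ∀ y, θ y ≤ 1 := fun y => max_le zero_le_one (min_le_left _ _)
  have hθL : LipschitzWith (2 / s).toNNReal θ := by
    have h : LipschitzWith (2 / s).toNNReal fun y => 3 - 2 / s * dist y x := by
      refine LipschitzWith.of_dist_le_mul fun y z => ?_
      rw [Real.dist_eq, Real.coe_toNNReal _ (by positivity), sub_sub_sub_cancel_left, ← mul_sub,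
        abs_mul, abs_of_pos (by positivity : 0 < 2 / s), abs_sub_comm]
      exact mul_le_mul_of_nonneg_left (abs_dist_sub_le _ _ _) (by positivity)
    exact (h.const_min 1).const_max 0
  have hθF : ∀ y ∉ closedBall x (3 * s / 2), θ y = 0 := by
    intro y hy
    rw [mem_closedBall, not_le] at hy
    refine max_eq_left ((min_le_right _ _).trans ?_)
    have : 2 / s * (3 * s / 2) ≤ 2 / s * dist y x :=
      mul_le_mul_of_nonneg_left hy.le (by positivity)
    have e : 2 / s * (3 * s / 2) = 3 := by field_simp
    linarith
  have hθB : ∀ y ∈ ball x s, θ y = 1 := by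
    intro y hy
    rw [mem_ball] at hy
    have : 2 / s * dist y x ≤ 2 / s * s := mul_le_mul_of_nonneg_left hy.le (by positivity)
    have e : 2 / s * s = 2 := by field_simp
    simp only [hθ]
    rw [min_eq_left (by linarith), max_eq_right zero_le_one]
  have hmain : ∀ k, min (μ (E ∩ ball x s)) (μ (Eᶜ ∩ ball x s)) ≤
      (∫⁻ y in closedBall x s, ENNReal.ofReal |us k y - E.indicator (fun _ => (1:ℝ)) y| ∂μ) +
      ENNReal.ofReal (CP * s) * ∫⁻ y in ball x (2 * s), lipConst (us k) y ∂μ := by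
    intro k
    have hv := (h1 k).mul_cutoff isClosed_closedBall
      (closedBall_subset_ball (by linarith)) hθL hθ0 hθ1 hθF
    obtain ⟨a, ha⟩ := hP.exists_lintegral_le hCP hd hv x hs
    refine (min_measure_le_lintegral hE measurableSet_ball a).trans ?_
    have e1 : ∫⁻ y in ball x s, lipConst (fun y => θ y * us k y) y ∂μ ≤
        ∫⁻ y in ball x (2 * s), lipConst (us k) y ∂μ := by
      refine le_trans (le_of_eq ?_) (lintegral_mono_set (ball_subset_ball (by linarith)))
      refine setLIntegral_congr_fun measurableSet_ball fun y hy => lipConst_congr ?_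
      filter_upwards [isOpen_ball.mem_nhds hy] with z hz
      rw [hθB z hz, one_mul]
    refine le_trans ?_ (add_le_add (lintegral_mono_set ball_subset_closedBall)
      (ha.trans (mul_le_mul_right e1 _)))
    rw [← lintegral_add_right' _ (by
      have := hv.continuous
      exact (ENNReal.continuous_ofReal.comp (by fun_prop)).measurable.aemeasurable)]
    refine setLIntegral_mono' measurableSet_ball fun y hy => ?_
    rw [hθB y hy, one_mul, ← ENNReal.ofReal_add (abs_nonneg _) (abs_nonneg _)]
    refine ENNReal.ofReal_le_ofReal ?_
    rw [abs_sub_comm (us k y)]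
    exact abs_sub_le _ _ _
  have hlim := h2 (closedBall x s) isClosed_closedBall isBounded_closedBall
    (closedBall_subset_ball (by linarith))
  rw [ENNReal.div_le_iff hC0 ENNReal.ofReal_ne_top]
  refine ENNReal.le_of_forall_pos_le_add fun ε hε _ => ?_
  rw [← tsub_le_iff_right, ← ENNReal.div_le_iff hC0 ENNReal.ofReal_ne_top]
  refine le_liminf_of_le (by isBoundedDefault) ?_
  filter_upwards [hlim.eventually_le_const (ENNReal.coe_pos.2 hε)] with k hk
  rw [ENNReal.div_le_iff hC0 ENNReal.ofReal_ne_top, tsub_le_iff_right, mul_comm, add_comm]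
  exact (hmain k).trans (add_le_add_left hk _)

end Isoperimetric

section Cutoff

variable {X : Type u} [PseudoMetricSpace X]

lemma lipConst_zero (x : X) : lipConst (fun _ : X => (0:ℝ)) x = 0 := by
  refine le_antisymm ?_ bot_le
  have := lipConst_le_of_eventually (u := fun _ : X => (0:ℝ)) (x := x) (L := 0) (by simp) le_rfl
  simpa using this

lemma exists_ball_cutoff (c : X) {r l : ℝ} (hr : 0 < r) (hl : 1 < l) :
    ∃ (ψ : X → ℝ) (L : ℝ≥0) (a : ℝ), r < a ∧ LipschitzWith L ψ ∧ (∀ x, 0 ≤ ψ x) ∧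
      (∀ x, ψ x ≤ 1) ∧ (∀ x ∈ ball c a, ψ x = 1) ∧ (∀ x ∉ ball c (2 * r), ψ x = 0) ∧
      ∀ x, ∀ᶠ y in 𝓝 x, |ψ y - ψ x| ≤
        (ball c (2 * r)).indicator (fun _ => l / r) x * dist y x := by
  have hl0 : 0 < l := one_pos.trans hl
  set g : ℝ := (1 - 1 / l) * r / 2 with hg
  have hg0 : 0 < g := by
    have : 1 / l < 1 := (div_lt_one hl0).2 hl
    have : 0 < 1 - 1 / l := by linarith
    positivity
  have hlr : 0 < l / r := by positivity
  have hgap : l / r * (2 * r - g - (r + g)) = 1 := by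
    rw [hg]; field_simp; ring
  set ψ : X → ℝ := fun x => max 0 (min 1 (l / r * (2 * r - g - dist x c))) with hψ
  have hL : LipschitzWith (l / r).toNNReal ψ := by
    have h : LipschitzWith (l / r).toNNReal fun x => l / r * (2 * r - g - dist x c) := by
      refine LipschitzWith.of_dist_le_mul fun y z => ?_
      rw [Real.dist_eq, Real.coe_toNNReal _ hlr.le, ← mul_sub, sub_sub_sub_cancel_left,
        abs_mul, abs_of_pos hlr, abs_sub_comm]
      exact mul_le_mul_of_nonneg_left (abs_dist_sub_le _ _ _) hlr.le
    exact (h.const_min 1).const_max 0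
  have hzero : ∀ x, 2 * r - g ≤ dist x c → ψ x = 0 := by
    intro x hx
    refine max_eq_left ((min_le_right _ _).trans ?_)
    exact mul_nonpos_of_nonneg_of_nonpos hlr.le (by linarith)
  refine ⟨ψ, (l / r).toNNReal, r + g, by linarith, hL, fun x => le_max_left _ _,
    fun x => max_le zero_le_one (min_le_left _ _), fun x hx => ?_, fun x hx => ?_, fun x => ?_⟩
  · rw [mem_ball] at hx
    have : l / r * (2 * r - g - (r + g)) ≤ l / r * (2 * r - g - dist x c) :=
      mul_le_mul_of_nonneg_left (by linarith) hlr.le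
    simp only [hψ]
    rw [min_eq_left (by linarith), max_eq_right zero_le_one]
  · rw [mem_ball, not_lt] at hx
    exact hzero x (by linarith)
  · by_cases hx : x ∈ ball c (2 * r)
    · rw [indicator_of_mem hx]
      refine Eventually.of_forall fun y => ?_
      have := hL.dist_le_mul y x
      rwa [Real.dist_eq, Real.coe_toNNReal _ hlr.le] at this
    · rw [indicator_of_notMem hx]
      rw [mem_ball, not_lt] at hx
      have hc : Continuous fun y => dist y c := by fun_prop
      filter_upwards [(hc.tendsto x).eventually_const_lt (by linarith : 2 * r - g < dist x c)]
        with y hy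
      rw [hzero y hy.le, hzero x (by linarith)]
      simp

lemma exists_finset_cutoff {ι : Type*} (s : Finset ι) (c : ι → X) {r : ι → ℝ} {l : ℝ}
    (hr : ∀ i ∈ s, 0 < r i) (hl : 1 < l) :
    ∃ (θ : X → ℝ) (L : ℝ≥0) (F : Set X), IsClosed F ∧
      F ⊆ (⋃ i ∈ s, closedBall (c i) (r i))ᶜ ∧ LipschitzWith L θ ∧ (∀ x, 0 ≤ θ x) ∧
      (∀ x, θ x ≤ 1) ∧ (∀ x ∉ F, θ x = 0) ∧
      (∀ x, (∀ i ∈ s, x ∉ ball (c i) (2 * r i)) → θ x = 1) ∧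
      ∀ x, ∀ᶠ y in 𝓝 x, |θ y - θ x| ≤
        (∑ i ∈ s, (ball (c i) (2 * r i)).indicator (fun _ => l / r i) x) * dist y x := by
  classical
  induction s using Finset.induction_on with
  | empty =>
    exact ⟨fun _ => 1, 0, univ, isClosed_univ, by simp, LipschitzWith.const 1, by simp, by simp,
      by simp, by simp, by simp⟩
  | insert j s hj ih =>
    obtain ⟨θ, L, F, hF, hFs, hθL, h0, h1, hθF, hθ1, hθ⟩ :=
      ih fun i hi => hr i (Finset.mem_insert_of_mem hi)
    obtain ⟨ψ, M, a, ha, hψM, g0, g1, hψa, hψ0, hψ⟩ :=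
      exists_ball_cutoff (c j) (hr j (Finset.mem_insert_self _ _)) hl
    have key : ∀ x y, |(1 - ψ y) * θ y - (1 - ψ x) * θ x| ≤ |ψ y - ψ x| + |θ y - θ x| := by
      intro x y
      have e : (1 - ψ y) * θ y - (1 - ψ x) * θ x =
          -(ψ y - ψ x) * θ y + (1 - ψ x) * (θ y - θ x) := by ring
      rw [e]
      refine (abs_add_le _ _).trans (add_le_add ?_ ?_)
      · rw [abs_mul, abs_neg, abs_of_nonneg (h0 y)]
        exact mul_le_of_le_one_right (abs_nonneg _) (h1 y)
      · rw [abs_mul, abs_of_nonneg (by linarith [g1 x] : 0 ≤ 1 - ψ x)]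
        exact mul_le_of_le_one_left (abs_nonneg _) (by linarith [g0 x])
    refine ⟨fun x => (1 - ψ x) * θ x, M + L, (ball (c j) a)ᶜ ∩ F,
      isOpen_ball.isClosed_compl.inter hF, ?_, ?_, fun x => ?_, fun x => ?_, fun x hx => ?_,
      fun x hx => ?_, fun x => ?_⟩
    · rw [Finset.set_biUnion_insert, compl_union]
      exact inter_subset_inter (compl_subset_compl.2 (closedBall_subset_ball ha)) hFs
    · refine LipschitzWith.of_dist_le_mul fun y x => ?_
      rw [Real.dist_eq]
      have h2 := hψM.dist_le_mul y x
      have h3 := hθL.dist_le_mul y x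
      rw [Real.dist_eq] at h2 h3
      push_cast
      linarith [key x y]
    · exact mul_nonneg (by linarith [g1 x]) (h0 x)
    · exact mul_le_one₀ (by linarith [g0 x]) (h0 x) (h1 x)
    · rw [mem_inter_iff, not_and_or, notMem_compl_iff] at hx
      rcases hx with hx | hx
      · simp [hψa x hx]
      · simp [hθF x hx]
    · beta_reduce
      rw [hψ0 x (hx j (Finset.mem_insert_self _ _)),
        hθ1 x fun i hi => hx i (Finset.mem_insert_of_mem hi)]
      norm_num
    · filter_upwards [hθ x, hψ x] with y hy1 hy2
      rw [Finset.sum_insert hj, add_mul]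
      exact (key x y).trans (add_le_add hy2 hy1)

end Cutoff

section Cut

variable {X : Type u} [MetricSpace X] [MeasurableSpace X] [BorelSpace X] {μ : Measure X}

/-- Removing finitely many balls from a set of finite perimeter. -/
lemma exists_locallyLipschitz_cut {E : Set X} (hE : NullMeasurableSet E μ) {ι : Type*}
    (s : Finset ι) (c : ι → X) {r : ι → ℝ} {l : ℝ} (hr : ∀ i ∈ s, 0 < r i) (hl : 1 < l)
    (hfin : perimeterOn μ E (⋃ i ∈ s, closedBall (c i) (r i))ᶜ ≠ ⊤) {ε : ℝ≥0∞} (hε : ε ≠ 0)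
    (x₀ : X) (R : ℝ) :
    ∃ v : X → ℝ, LocallyLipschitzOnSet v univ ∧
      ∫⁻ x, lipConst v x ∂μ ≤ perimeterOn μ E (⋃ i ∈ s, closedBall (c i) (r i))ᶜ +
        ∑ i ∈ s, ENNReal.ofReal (l / r i) * μ (E ∩ ball (c i) (2 * r i)) + ε ∧
      ∫⁻ x in closedBall x₀ R, ENNReal.ofReal |v x - E.indicator (fun _ => (1:ℝ)) x| ∂μ ≤
        ∑ i ∈ s, μ (E ∩ ball (c i) (2 * r i)) + ε := by
  set W := (⋃ i ∈ s, closedBall (c i) (r i))ᶜ with hW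
  have hWo : IsOpen W := by
    rw [hW, isOpen_compl_iff]
    exact s.finite_toSet.isClosed_biUnion fun _ _ => isClosed_closedBall
  obtain ⟨θ, L, F, hF, hFW, hθL, h0, h1, hθF, hθ1, hθ⟩ := exists_finset_cutoff s c hr hl
  obtain ⟨R', hR', hball⟩ : ∃ R', R ≤ R' ∧ ∀ i ∈ s, ball (c i) (2 * r i) ⊆ closedBall x₀ R' := by
    have hb : Bornology.IsBounded (closedBall x₀ R ∪ ⋃ i ∈ s, ball (c i) (2 * r i)) :=
      isBounded_closedBall.union ((Bornology.isBounded_biUnion s.finite_toSet).2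
        fun _ _ => isBounded_ball)
    obtain ⟨R', hR'⟩ := hb.subset_closedBall x₀
    refine ⟨max R R', le_max_left _ _, fun i hi => ?_⟩
    exact ((subset_biUnion_of_mem (u := fun i => ball (c i) (2 * r i)) hi).trans
      (subset_union_right.trans hR')).trans (closedBall_subset_closedBall (le_max_right _ _))
  set χ : X → ℝ := E.indicator fun _ => (1:ℝ) with hχ
  have hχm : AEMeasurable χ μ := aemeasurable_const.indicator₀ hE
  set K := F ∩ closedBall x₀ R' with hK
  have hε2 : ε / 2 ≠ 0 := (ENNReal.half_pos hε).ne'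
  obtain ⟨us, hus⟩ := iInf_lt_iff.1 (ENNReal.lt_add_right hfin hε2)
  obtain ⟨hu1, hus⟩ := iInf_lt_iff.1 hus
  obtain ⟨hu2, hus⟩ := iInf_lt_iff.1 hus
  set G : ℝ≥0∞ := ∑ i ∈ s, ENNReal.ofReal (l / r i) with hG
  have hGt : G ≠ ⊤ := by simp [hG, ENNReal.sum_eq_top]
  have ht := hu2 K (hF.inter isClosed_closedBall)
    (isBounded_closedBall.subset inter_subset_right) (inter_subset_left.trans hFW)
  have ht' := ENNReal.Tendsto.const_mul (a := G) ht (Or.inr hGt)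
  rw [mul_zero] at ht'
  obtain ⟨k, hk, hk1, hk2⟩ := ((frequently_lt_of_liminf_lt (by isBoundedDefault) hus).and_eventually
    ((ht.eventually_le_const (pos_iff_ne_zero.2 hε)).and
      (ht'.eventually_le_const (pos_iff_ne_zero.2 hε2)))).exists
  set u := us k
  have hum : AEMeasurable u (μ.restrict F) :=
    (((hu1 k).continuousOn hWo).mono hFW).aemeasurable hF.measurableSet
  have hdm : AEMeasurable (fun x => ENNReal.ofReal |u x - χ x|) (μ.restrict F) :=
    ((hum.sub hχm.restrict).norm).ennreal_ofReal
  have hv := (hu1 k).mul_cutoff hF hFW hθL h0 h1 hθF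
  have hχ0 : ∀ x, 0 ≤ χ x := fun x => indicator_nonneg (fun _ _ => zero_le_one) x
  refine ⟨fun x => θ x * u x, hv, ?_, ?_⟩
  · have hoff : ∀ x ∉ F, lipConst (fun x => θ x * u x) x = 0 := by
      intro x hx
      rw [lipConst_congr (v := fun _ => 0), lipConst_zero]
      filter_upwards [hF.isOpen_compl.mem_nhds hx] with y hy
      rw [hθF y hy, zero_mul]
    have e1 : ∫⁻ x, lipConst (fun x => θ x * u x) x ∂μ =
        ∫⁻ x in F, lipConst (fun x => θ x * u x) x ∂μ := by
      rw [← lintegral_indicator hF.measurableSet]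
      refine lintegral_congr fun x => ?_
      by_cases hx : x ∈ F
      · rw [indicator_of_mem hx]
      · rw [indicator_of_notMem hx, hoff x hx]
    set f1 : X → ℝ≥0∞ := fun x => ∑ i ∈ s,
      (E ∩ ball (c i) (2 * r i)).indicator (fun _ => ENNReal.ofReal (l / r i)) x with hf1
    set f2 : X → ℝ≥0∞ := (closedBall x₀ R').indicator fun x => G * ENNReal.ofReal |u x - χ x|
      with hf2
    have hf1m : AEMeasurable f1 μ := by
      refine Finset.aemeasurable_fun_sum _ fun i _ => ?_
      exact aemeasurable_const.indicator₀ (hE.inter measurableSet_ball.nullMeasurableSet)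
    have hf2m : AEMeasurable f2 (μ.restrict F) :=
      (hdm.const_mul G).indicator measurableSet_closedBall
    have hpt : ∀ x, lipConst (fun x => θ x * u x) x ≤ lipConst u x + (f1 x + f2 x) := by
      intro x
      refine (lipConst_mul_le (Finset.sum_nonneg fun i hi => indicator_nonneg
        (fun _ _ => (div_pos (one_pos.trans hl) (hr i hi)).le) x) h0 h1 (hθ x)).trans
        (add_le_add_right ?_ _)
      rw [ENNReal.ofReal_sum_of_nonneg (fun i hi => indicator_nonneg
        (fun _ _ => (div_pos (one_pos.trans hl) (hr i hi)).le) x)]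
      have hu : ENNReal.ofReal |u x| ≤ ENNReal.ofReal (χ x) + ENNReal.ofReal |u x - χ x| := by
        rw [← ENNReal.ofReal_add (hχ0 x) (abs_nonneg _)]
        refine ENNReal.ofReal_le_ofReal ?_
        have := abs_add_le (u x - χ x) (χ x)
        rw [sub_add_cancel, abs_of_nonneg (hχ0 x)] at this
        linarith
      refine (mul_le_mul_right hu _).trans ?_
      rw [mul_add, Finset.sum_mul]
      refine add_le_add (Finset.sum_le_sum fun i hi => ?_) ?_
      · by_cases hx : x ∈ ball (c i) (2 * r i) <;> by_cases hxE : x ∈ E <;> simp [hx, hxE, hχ]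
      · by_cases hx : x ∈ closedBall x₀ R'
        · rw [hf2, indicator_of_mem hx]
          refine mul_le_mul_left (Finset.sum_le_sum fun i hi => ENNReal.ofReal_le_ofReal ?_) _
          exact indicator_le_self' (fun _ _ => (div_pos (one_pos.trans hl) (hr i hi)).le) x
        · rw [Finset.sum_eq_zero, zero_mul]
          · exact bot_le
          · intro i hi
            rw [indicator_of_notMem fun h => hx (hball i hi h), ENNReal.ofReal_zero]
    rw [e1]
    refine (lintegral_mono fun x => hpt x).trans ?_
    rw [lintegral_add_right' (f := lipConst u) (g := fun x => f1 x + f2 x) (hf1m.restrict.add hf2m), lintegral_add_left' hf1m.restrict]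
    have b1 : ∫⁻ x in F, lipConst u x ∂μ ≤ perimeterOn μ E W + ε / 2 :=
      (lintegral_mono_set hFW).trans hk.le
    have b2 : ∫⁻ x in F, f1 x ∂μ ≤
        ∑ i ∈ s, ENNReal.ofReal (l / r i) * μ (E ∩ ball (c i) (2 * r i)) := by
      refine (setLIntegral_le_lintegral _ _).trans (le_of_eq ?_)
      rw [lintegral_finsetSum' _ fun i _ => aemeasurable_const.indicator₀
        (hE.inter measurableSet_ball.nullMeasurableSet)]
      refine Finset.sum_congr rfl fun i _ => ?_
      rw [lintegral_indicator_const₀ (hE.inter measurableSet_ball.nullMeasurableSet)]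
    have b3 : ∫⁻ x in F, f2 x ∂μ ≤ ε / 2 := by
      rw [hf2, setLIntegral_indicator measurableSet_closedBall, inter_comm, ← hK,
        lintegral_const_mul' _ _ hGt]
      exact hk2
    calc _ ≤ (perimeterOn μ E W + ε / 2) +
        (∑ i ∈ s, ENNReal.ofReal (l / r i) * μ (E ∩ ball (c i) (2 * r i)) + ε / 2) :=
          add_le_add b1 (add_le_add b2 b3)
      _ = _ := by
        rw [add_add_add_comm, ENNReal.add_halves]
  · set f1 : X → ℝ≥0∞ := fun x => ∑ i ∈ s,
      (E ∩ ball (c i) (2 * r i)).indicator (fun _ => (1:ℝ≥0∞)) x with hf1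
    have hf1m : AEMeasurable f1 μ := by
      refine Finset.aemeasurable_fun_sum _ fun i _ => ?_
      exact aemeasurable_const.indicator₀ (hE.inter measurableSet_ball.nullMeasurableSet)
    have hpt : ∀ x, ENNReal.ofReal |θ x * u x - χ x| ≤
        f1 x + F.indicator (fun x => ENNReal.ofReal |u x - χ x|) x := by
      intro x
      have hb : ENNReal.ofReal ((1 - θ x) * χ x) ≤ f1 x := by
        by_cases hx : ∀ i ∈ s, x ∉ ball (c i) (2 * r i)
        · simp [hθ1 x hx]
        · push Not at hx
          obtain ⟨i, hi, hx⟩ := hx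
          refine le_trans ?_ (Finset.single_le_sum (f := fun i =>
            (E ∩ ball (c i) (2 * r i)).indicator (fun _ => (1:ℝ≥0∞)) x) (fun _ _ => bot_le) hi)
          by_cases hxE : x ∈ E
          · have : x ∈ E ∩ ball (c i) (2 * r i) := ⟨hxE, hx⟩
            simp only [indicator_of_mem this]
            rw [← ENNReal.ofReal_one]
            refine ENNReal.ofReal_le_ofReal ?_
            simp [hχ, hxE, h0 x]
          · simp [hχ, hxE]
      have ha : |θ x * u x - χ x| ≤ (1 - θ x) * χ x + θ x * |u x - χ x| := by
        have e : θ x * u x - χ x = -((1 - θ x) * χ x) + θ x * (u x - χ x) := by ring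
        rw [e]
        refine (abs_add_le _ _).trans (le_of_eq ?_)
        rw [abs_neg, abs_mul (θ x), abs_of_nonneg (h0 x),
          abs_of_nonneg (mul_nonneg (by linarith [h1 x]) (hχ0 x))]
      refine (ENNReal.ofReal_le_ofReal ha).trans ?_
      have hc : 0 ≤ (1 - θ x) * χ x := mul_nonneg (by linarith [h1 x]) (hχ0 x)
      rw [ENNReal.ofReal_add hc (mul_nonneg (h0 x) (abs_nonneg _))]
      refine add_le_add hb ?_
      by_cases hx : x ∈ F
      · rw [indicator_of_mem hx]
        exact ENNReal.ofReal_le_ofReal (mul_le_of_le_one_left (abs_nonneg _) (h1 x))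
      · rw [hθF x hx, zero_mul, ENNReal.ofReal_zero]
        exact bot_le
    refine (lintegral_mono fun x => hpt x).trans ?_
    rw [lintegral_add_left' hf1m.restrict]
    refine add_le_add ?_ ?_
    · refine (setLIntegral_le_lintegral _ _).trans (le_of_eq ?_)
      rw [lintegral_finsetSum' _ fun i _ => aemeasurable_const.indicator₀
        (hE.inter measurableSet_ball.nullMeasurableSet)]
      refine Finset.sum_congr rfl fun i _ => ?_
      rw [lintegral_indicator_const₀ (hE.inter measurableSet_ball.nullMeasurableSet), one_mul]
    · rw [setLIntegral_indicator hF.measurableSet]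
      refine (lintegral_mono_set ?_).trans hk1
      exact inter_subset_inter_right _ (closedBall_subset_closedBall hR')

end Cut

section Hausdorff

variable {X : Type u} [PseudoMetricSpace X] [MeasurableSpace X] {μ : Measure X}

lemma codimOneH_mono {A B : Set X} (h : A ⊆ B) : codimOneH μ A ≤ codimOneH μ B := by
  refine iSup₂_mono fun δ _ => iInf₂_mono fun c r => iInf_mono fun _ => ?_
  exact iInf_mono' fun h' => ⟨h.trans h', le_rfl⟩

lemma exists_cover_nat {ι : Type*} [Countable ι] (x₀ : X) {A : Set X} {δ : ℝ} (hδ : 0 < δ)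
    (c : ι → X) (r : ι → ℝ) (hr : ∀ i, r i ≤ δ) (hA : A ⊆ ⋃ i, ball (c i) (r i)) :
    ∃ (c' : ℕ → X) (r' : ℕ → ℝ), (∀ i, r' i ≤ δ) ∧ (A ⊆ ⋃ i, ball (c' i) (r' i)) ∧
      (∑' i, if 0 < r' i then μ (ball (c' i) (r' i)) / ENNReal.ofReal (r' i) else 0) =
        ∑' i, if 0 < r i then μ (ball (c i) (r i)) / ENNReal.ofReal (r i) else 0 := by
  obtain ⟨e, he⟩ := exists_injective_nat ι
  refine ⟨Function.extend e c fun _ => x₀, Function.extend e r fun _ => 0, fun n => ?_, ?_, ?_⟩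
  · by_cases hn : ∃ i, e i = n
    · obtain ⟨i, rfl⟩ := hn
      rw [he.extend_apply]
      exact hr i
    · rw [Function.extend_apply' _ _ _ hn]
      exact hδ.le
  · refine hA.trans (iUnion_subset fun i => ?_)
    refine subset_iUnion_of_subset (e i) ?_
    rw [he.extend_apply, he.extend_apply]
  · rw [← he.tsum_eq (f := fun n => if 0 < Function.extend e r (fun _ => 0) n then _ else 0)]
    · simp only [he.extend_apply]
    · intro n hn
      by_contra h
      rw [mem_range] at h
      simp [Function.extend_apply' _ _ _ h] at hn

lemma codimOneH_eq_zero_iff {A : Set X} : codimOneH μ A = 0 ↔ ∀ δ : ℝ, 0 < δ → ∀ ε : ℝ≥0∞, ε ≠ 0 →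
    ∃ (c : ℕ → X) (r : ℕ → ℝ), (∀ i, r i ≤ δ) ∧ (A ⊆ ⋃ i, ball (c i) (r i)) ∧
      (∑' i, if 0 < r i then μ (ball (c i) (r i)) / ENNReal.ofReal (r i) else 0) < ε := by
  constructor
  · intro h δ hδ ε hε
    have h1 := le_iSup₂ (f := fun (δ : ℝ) (_ : 0 < δ) =>
      ⨅ (c : ℕ → X) (r : ℕ → ℝ) (_ : ∀ i, r i ≤ δ) (_ : A ⊆ ⋃ i, ball (c i) (r i)),
      ∑' i, if 0 < r i then μ (ball (c i) (r i)) / ENNReal.ofReal (r i) else 0) δ hδ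
    have h2 := (h1.trans (le_of_eq h)).trans_lt (pos_iff_ne_zero.2 hε)
    simp only [iInf_lt_iff] at h2
    obtain ⟨c, r, hr, hA, hs⟩ := h2
    exact ⟨c, r, hr, hA, hs⟩
  · intro h
    refine le_antisymm (iSup₂_le fun δ hδ => ?_) bot_le
    refine le_of_forall_gt fun ε hε => ?_
    obtain ⟨c, r, hr, hA, hs⟩ := h δ hδ ε hε.ne'
    exact (iInf₂_le_of_le c r (iInf₂_le_of_le hr hA le_rfl)).trans_lt hs

lemma codimOneH_iUnion_eq_zero {A : ℕ → Set X} (h : ∀ n, codimOneH μ (A n) = 0) :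
    codimOneH μ (⋃ n, A n) = 0 := by
  rw [codimOneH_eq_zero_iff]
  intro δ hδ ε hε
  obtain ⟨ε', hε', hsum⟩ := ENNReal.exists_pos_sum_of_countable hε ℕ
  choose c r hr hA hs using fun n => codimOneH_eq_zero_iff.1 (h n) δ hδ (ε' n)
    (ENNReal.coe_pos.2 (hε' n)).ne'
  obtain ⟨c', r', h1, h2, h3⟩ := exists_cover_nat (μ := μ) (c 0 0) hδ (A := ⋃ n, A n)
    (fun p : ℕ × ℕ => c p.1 p.2) (fun p => r p.1 p.2) (fun p => hr _ _) (by
      rw [iUnion_prod']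
      exact iUnion_mono hA)
  refine ⟨c', r', h1, h2, ?_⟩
  rw [h3, ENNReal.tsum_prod (f := fun n i => if 0 < r n i then
    μ (ball (c n i) (r n i)) / ENNReal.ofReal (r n i) else 0)]
  exact (ENNReal.tsum_le_tsum fun n => (hs n).le).trans_lt hsum

lemma codimOneH_union_eq_zero {A B : Set X} (hA : codimOneH μ A = 0) (hB : codimOneH μ B = 0) :
    codimOneH μ (A ∪ B) = 0 := by
  have h : ∀ n : ℕ, codimOneH μ (if n = 0 then A else B) = 0 := by
    intro n
    by_cases hn : n = 0
    · rw [if_pos hn, hA]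
    · rw [if_neg hn, hB]
  refine le_antisymm ((codimOneH_mono ?_).trans (codimOneH_iUnion_eq_zero h).le) bot_le
  exact union_subset (subset_iUnion_of_subset 0 (by simp)) (subset_iUnion_of_subset 1 (by simp))

/-- The cut-and-compare argument: a finite-perimeter set cannot be improved by a definite amount
at arbitrarily small scales. -/
lemma false_of_forall_exists_improvement {E : Set X} (hfin : perimeterOn μ E univ ≠ ⊤)
    {b C : ℝ≥0∞} (hb : b ≠ 0) (hC : C ≠ ⊤) (x₀ : X) {δ₀ : ℝ} (hδ₀ : 0 < δ₀)
    (h : ∀ δ : ℝ, 0 < δ → δ ≤ δ₀ → ∀ ε : ℝ≥0∞, ε ≠ 0 → ∀ R : ℝ, ∃ v : X → ℝ,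
      LocallyLipschitzOnSet v univ ∧ ∫⁻ x, lipConst v x ∂μ + b ≤ perimeterOn μ E univ + ε ∧
      ∫⁻ x in closedBall x₀ R, ENNReal.ofReal |v x - E.indicator (fun _ => (1:ℝ)) x| ∂μ ≤
        ENNReal.ofReal δ * C + ε) : False := by
  wlog hbt : b ≠ ⊤ generalizing b
  · obtain rfl : b = ⊤ := not_not.1 hbt
    obtain ⟨v, -, h2, -⟩ := h δ₀ hδ₀ le_rfl 1 one_ne_zero 0
    rw [add_top, top_le_iff] at h2
    exact (ENNReal.add_lt_top.2 ⟨lt_top_iff_ne_top.2 hfin, ENNReal.one_lt_top⟩).ne h2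
  have hb2 : b / 2 ≠ 0 := (ENNReal.half_pos hb).ne'
  have hb2t : b / 2 ≠ ⊤ := ENNReal.div_ne_top hbt two_ne_zero
  set e : ℕ → ℝ≥0∞ := fun n => min (b / 2) ((n:ℝ≥0∞) + 1)⁻¹ with he
  have he0 : ∀ n, e n ≠ 0 := fun n => (lt_min (pos_iff_ne_zero.2 hb2)
    (ENNReal.inv_pos.2 (by simp))).ne'
  choose v hv hv1 hv2 using fun n : ℕ => h (δ₀ / (n + 1)) (by positivity)
    (div_le_self hδ₀.le (by simp)) (e n) (he0 n) n
  have hle : ∀ n, ∫⁻ x, lipConst (v n) x ∂μ + b / 2 ≤ perimeterOn μ E univ := by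
    intro n
    have := (hv1 n).trans (add_le_add_right (min_le_left _ _) _)
    conv at this => lhs; rw [← ENNReal.add_halves b, ← add_assoc]
    exact (ENNReal.add_le_add_iff_right hb2t).1 this
  have hP0 : perimeterOn μ E univ ≠ 0 := by
    intro h0
    have := hle 0
    rw [h0] at this
    exact hb2 (add_eq_zero.1 (le_antisymm this bot_le)).2
  have hlim : TendstoL1loc μ v (E.indicator fun _ => (1:ℝ)) univ := by
    intro K _ hKb _
    obtain ⟨R, hR⟩ := hKb.subset_closedBall x₀
    have hz : Tendsto (fun n : ℕ => ENNReal.ofReal (δ₀ / (n + 1)) * C + ((n:ℝ≥0∞) + 1)⁻¹) atTop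
        (𝓝 0) := by
      have h1 : Tendsto (fun n : ℕ => δ₀ / ((n:ℝ) + 1)) atTop (𝓝 0) :=
        by simpa [div_eq_mul_inv] using
          (tendsto_one_div_add_atTop_nhds_zero_nat (𝕜 := ℝ)).const_mul δ₀
      have h2 := ENNReal.Tendsto.mul_const (b := C) (ENNReal.tendsto_ofReal h1) (Or.inr hC)
      have h3 : Tendsto (fun n : ℕ => ((n:ℝ≥0∞) + 1)⁻¹) atTop (𝓝 0) := by
        have := (tendsto_add_atTop_iff_nat 1).2 ENNReal.tendsto_inv_nat_nhds_zero
        simpa using this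
      simpa using h2.add h3
    refine tendsto_of_tendsto_of_tendsto_of_le_of_le' tendsto_const_nhds hz
      (Eventually.of_forall fun _ => bot_le) ?_
    filter_upwards [eventually_ge_atTop ⌈R⌉₊] with n hn
    refine (lintegral_mono_set (hR.trans (closedBall_subset_closedBall ?_))).trans
      ((hv2 n).trans (add_le_add_right (min_le_right _ _) _))
    exact (Nat.le_ceil R).trans (by exact_mod_cast hn)
  have h1 : perimeterOn μ E univ ≤
      liminf (fun n => ∫⁻ x in univ, lipConst (v n) x ∂μ) atTop :=
    iInf_le_of_le v (iInf₂_le_of_le hv hlim le_rfl)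
  have h2 : liminf (fun n => ∫⁻ x in univ, lipConst (v n) x ∂μ) atTop ≤
      perimeterOn μ E univ - b / 2 := by
    refine (liminf_le_liminf (v := fun _ => perimeterOn μ E univ - b / 2)
      (Eventually.of_forall fun n => ?_)).trans (by rw [liminf_const])
    rw [setLIntegral_univ]
    exact ENNReal.le_sub_of_add_le_right hb2t (hle n)
  exact (h1.trans h2).not_gt (ENNReal.sub_lt_self hfin hP0 hb2)

end Hausdorff

section NullLemma

variable {X : Type u} [MetricSpace X] [MeasurableSpace X] [BorelSpace X] {μ : Measure X}

lemma exists_locallyLipschitz_of_disjoint {E : Set X} (hE : NullMeasurableSet E μ)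
    (hfin : perimeterOn μ E univ ≠ ⊤) {ι : Type*} (s : Finset ι) (c : ι → X) {r : ι → ℝ}
    {l δ : ℝ} {t : ℝ≥0∞} (hr : ∀ i ∈ s, 0 < r i) (hrδ : ∀ i ∈ s, r i ≤ δ) (hl : 1 < l)
    (ht : t ≤ 1) (hd : (s : Set ι).PairwiseDisjoint fun i => closedBall (c i) (r i))
    (h : ∀ i ∈ s, ENNReal.ofReal (l / r i) * μ (E ∩ ball (c i) (2 * r i)) ≤
      t * perimeterOn μ E (ball (c i) (r i)))
    {ε : ℝ≥0∞} (hε : ε ≠ 0) (x₀ : X) (R : ℝ) :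
    ∃ v : X → ℝ, LocallyLipschitzOnSet v univ ∧
      ∫⁻ x, lipConst v x ∂μ + ∑ i ∈ s, perimeterOn μ E (ball (c i) (r i)) ≤
        perimeterOn μ E univ + t * ∑ i ∈ s, perimeterOn μ E (ball (c i) (r i)) + ε ∧
      ∫⁻ x in closedBall x₀ R, ENNReal.ofReal |v x - E.indicator (fun _ => (1:ℝ)) x| ∂μ ≤
        ENNReal.ofReal δ * perimeterOn μ E univ + ε := by
  have hd' : (s : Set ι).PairwiseDisjoint fun i => ball (c i) (r i) :=
    hd.mono fun i => ball_subset_closedBall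
  obtain ⟨v, hv, h1, h2⟩ := exists_locallyLipschitz_cut hE s c hr hl
    (ne_top_of_le_ne_top hfin (totVarOn_mono _ (subset_univ _))) hε x₀ R
  have hsum : ∑ i ∈ s, perimeterOn μ E (ball (c i) (r i)) ≤ perimeterOn μ E univ :=
    sum_totVarOn_le_of_subset _ s _ (fun _ _ => isOpen_ball) hd' fun _ _ => subset_univ _
  refine ⟨v, hv, ?_, h2.trans (add_le_add_left ?_ _)⟩
  · set W := (⋃ i ∈ s, closedBall (c i) (r i))ᶜ with hW
    have hWP : perimeterOn μ E W + ∑ i ∈ s, perimeterOn μ E (ball (c i) (r i)) ≤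
        perimeterOn μ E univ := by
      refine (add_le_add_right (sum_totVarOn_le _ s _ (fun _ _ => isOpen_ball) hd') _).trans ?_
      refine (totVarOn_add_le _ (isOpen_biUnion fun _ _ => isOpen_ball) ?_).trans
        (totVarOn_mono _ (subset_univ _))
      exact disjoint_compl_left.mono_right (iUnion₂_mono fun _ _ => ball_subset_closedBall)
    have hS := Finset.sum_le_sum h
    rw [← Finset.mul_sum] at hS
    calc _ ≤ (perimeterOn μ E W + t * ∑ i ∈ s, perimeterOn μ E (ball (c i) (r i)) + ε) +
        ∑ i ∈ s, perimeterOn μ E (ball (c i) (r i)) :=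
          add_le_add_left (h1.trans (add_le_add_left (add_le_add_right hS _) _)) _
      _ = (perimeterOn μ E W + ∑ i ∈ s, perimeterOn μ E (ball (c i) (r i))) +
        t * ∑ i ∈ s, perimeterOn μ E (ball (c i) (r i)) + ε := by ring
      _ ≤ _ := by gcongr
  · refine le_trans (Finset.sum_le_sum fun i hi => ?_) (b := ∑ i ∈ s, ENNReal.ofReal δ *
      perimeterOn μ E (ball (c i) (r i))) ?_
    · have hl0 : 0 < l := one_pos.trans hl
      have hri := hr i hi
      calc μ (E ∩ ball (c i) (2 * r i)) = ENNReal.ofReal (r i / l) *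
          (ENNReal.ofReal (l / r i) * μ (E ∩ ball (c i) (2 * r i))) := by
            rw [← mul_assoc, ← ENNReal.ofReal_mul (by positivity),
              show r i / l * (l / r i) = 1 by field_simp, ENNReal.ofReal_one, one_mul]
        _ ≤ ENNReal.ofReal δ * (1 * perimeterOn μ E (ball (c i) (r i))) := by
            refine mul_le_mul' (ENNReal.ofReal_le_ofReal ?_)
              ((h i hi).trans (mul_le_mul_left ht _))
            exact (div_le_self hri.le hl.le).trans (hrδ i hi)
        _ = _ := by rw [one_mul]
    · rw [← Finset.mul_sum]
      exact mul_le_mul_right hsum _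

lemma codimOneH_eq_zero_of_frequently [Nonempty X] {Cd : ℝ≥0} (hD : IsDoublingWith μ Cd) {E : Set X}
    (hE : NullMeasurableSet E μ) (hfin : perimeterOn μ E univ ≠ ⊤) {l : ℝ} {t K : ℝ≥0∞}
    (hl : 1 < l) (ht : t < 1) (hK : K ≠ ⊤) {A : Set X}
    (h : ∀ x ∈ A, ∀ δ : ℝ, 0 < δ → ∃ r : ℝ, 0 < r ∧ r < δ ∧
      μ (ball x r) / ENNReal.ofReal r ≤ K * perimeterOn μ E (ball x r) ∧
      ENNReal.ofReal (l / r) * μ (E ∩ ball x (2 * r)) ≤ t * perimeterOn μ E (ball x r)) :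
    codimOneH μ A = 0 := by
  by_contra hA
  rw [codimOneH_eq_zero_iff] at hA
  push Not at hA
  obtain ⟨δ₀, hδ₀, ε₀, hε₀, hcov⟩ := hA
  wlog hεt : ε₀ ≠ ⊤ generalizing ε₀
  · refine this 1 one_ne_zero (fun c r h1 h2 => le_trans ?_ (hcov c r h1 h2)) ENNReal.one_ne_top
    rw [not_not.1 hεt]
    exact le_top
  have hne : A.Nonempty := by
    rw [nonempty_iff_ne_empty]
    rintro rfl
    obtain ⟨o⟩ := ‹Nonempty X›
    have := hcov (fun _ => o) (fun _ => 0) (fun _ => hδ₀.le) (empty_subset _)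
    simp only [lt_irrefl, if_false, tsum_zero, nonpos_iff_eq_zero] at this
    exact hε₀ this
  obtain ⟨x₀, hx₀⟩ := hne
  set C : ℝ≥0∞ := (Cd:ℝ≥0∞) ^ 3 * K with hC
  have hCt : C ≠ ⊤ := ENNReal.mul_ne_top (by simp) hK
  have hb : (1 - t) * (ε₀ / 2 / C) ≠ 0 :=
    mul_ne_zero (tsub_pos_of_lt ht).ne' (ENNReal.div_pos (ENNReal.half_pos hε₀).ne' hCt).ne'
  refine false_of_forall_exists_improvement hfin hb hfin x₀ (δ₀ := δ₀ / 8) (by positivity)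
    fun δ hδ hδ' ε hε R => ?_
  choose! r hr0 hrδ hr1 hr2 using fun x hx => h x hx δ hδ
  obtain ⟨u, huA, hu, hucov⟩ := Vitali.exists_disjoint_subfamily_covering_enlargement_closedBall
    A (fun x => x) r δ (fun x hx => (hrδ x hx).le) 5 (by norm_num)
  have hu' : Pairwise (Function.onFun Disjoint fun i : u => ball (i:X) (r i)) :=
    fun i j hij => (hu i.2 j.2 (Subtype.coe_injective.ne hij)).mono ball_subset_closedBall
      ball_subset_closedBall
  have hPpos : ∀ x ∈ A, perimeterOn μ E (ball x (r x)) ≠ 0 := by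
    intro x hx h0
    have := hr1 x hx
    rw [h0, mul_zero, nonpos_iff_eq_zero, ENNReal.div_eq_zero_iff] at this
    rcases this with h | h
    · exact (hD.ball_pos x (hr0 x hx)).ne' h
    · exact ENNReal.ofReal_ne_top h
  have htsum : ∑' i : u, perimeterOn μ E (ball (i:X) (r i)) ≠ ⊤ :=
    ne_top_of_le_ne_top hfin (tsum_totVarOn_le_of_subset _ _ (fun _ => isOpen_ball) hu'
      fun _ => subset_univ _)
  have hcount : Countable u := by
    have := Summable.countable_support_ennreal htsum
    have hall : Function.support (fun i : u => perimeterOn μ E (ball (i:X) (r i))) = univ :=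
      eq_univ_of_forall fun i => hPpos i (huA i.2)
    rw [hall] at this
    exact countable_univ_iff.1 this
  obtain ⟨c', r', h1, h2, h3⟩ := exists_cover_nat (μ := μ) x₀ hδ₀ (A := A)
    (fun i : u => (i:X)) (fun i : u => 8 * r i) (fun i => by
      have := hrδ i (huA i.2)
      linarith) (fun x hx => by
      obtain ⟨b, hb, hsub⟩ := hucov x hx
      refine mem_iUnion.2 ⟨⟨b, hb⟩, ?_⟩
      have := hr0 b (huA hb)
      exact closedBall_subset_ball (by linarith) (hsub (mem_closedBall_self (hr0 x hx).le)))
  have h4 := hcov c' r' h1 h2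
  rw [h3] at h4
  have h5 : ε₀ ≤ C * ∑' i : u, perimeterOn μ E (ball (i:X) (r i)) := by
    refine h4.trans ?_
    rw [← ENNReal.tsum_mul_left]
    refine ENNReal.tsum_le_tsum fun i => ?_
    have hri := hr0 i (huA i.2)
    rw [if_pos (by positivity), hC, mul_assoc]
    refine le_trans ?_ (mul_le_mul_right (hr1 i (huA i.2)) _)
    rw [← mul_div_assoc]
    refine ENNReal.div_le_div ?_ (ENNReal.ofReal_le_ofReal (by linarith))
    have := hD.ball_le (i:X) hri 3
    norm_num at this
    exact this
  have h6 : ε₀ / 2 < C * ∑' i : u, perimeterOn μ E (ball (i:X) (r i)) :=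
    (ENNReal.half_lt_self hε₀ hεt).trans_le h5
  rw [ENNReal.tsum_eq_iSup_sum, ENNReal.mul_iSup, lt_iSup_iff] at h6
  obtain ⟨s, hs⟩ := h6
  obtain ⟨v, hv, hv1, hv2⟩ := exists_locallyLipschitz_of_disjoint hE hfin s
    (fun i : u => (i:X)) (r := fun i => r i) (δ := δ) (fun i _ => hr0 i (huA i.2))
    (fun i _ => (hrδ i (huA i.2)).le) hl ht.le
    (fun i _ j _ hij => hu i.2 j.2 (Subtype.coe_injective.ne hij))
    (fun i _ => hr2 i (huA i.2)) hε x₀ R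
  refine ⟨v, hv, ?_, hv2⟩
  set S := ∑ i ∈ s, perimeterOn μ E (ball (i:X) (r i)) with hS
  have hSt : S ≠ ⊤ := ne_top_of_le_ne_top htsum (ENNReal.sum_le_tsum s)
  have hSa : ε₀ / 2 / C ≤ S := ENNReal.div_le_of_le_mul' hs.le
  have e1 : S = t * S + (1 - t) * S := by
    rw [← add_mul, add_tsub_cancel_of_le ht.le, one_mul]
  have htS : t * S ≠ ⊤ := ENNReal.mul_ne_top ht.ne_top hSt
  refine (add_le_add_right (mul_le_mul_right hSa _) _).trans ?_
  rw [← ENNReal.add_le_add_iff_right htS]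
  calc _ = ∫⁻ x, lipConst v x ∂μ + S := by rw [add_assoc, add_comm ((1 - t) * S), ← e1]
    _ ≤ _ := hv1
    _ = _ := by ring

end NullLemma

section Density

lemma _root_.Filter.Frequently.exists_pos_lt {p : ℝ → Prop} (h : ∃ᶠ r in 𝓝[>] (0:ℝ), p r) {δ : ℝ}
    (hδ : 0 < δ) : ∃ r, 0 < r ∧ r < δ ∧ p r := by
  obtain ⟨r, h1, h2⟩ := (h.and_eventually (Ioo_mem_nhdsGT hδ)).exists
  exact ⟨r, h2.1, h2.2, h1⟩

lemma _root_.frequently_nhdsGT_zero_of_forall {p : ℝ → Prop}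
    (h : ∀ δ : ℝ, 0 < δ → ∃ r, 0 < r ∧ r < δ ∧ p r) : ∃ᶠ r in 𝓝[>] (0:ℝ), p r := by
  rw [(nhdsGT_basis (0:ℝ)).frequently_iff]
  intro δ hδ
  obtain ⟨r, h1, h2, h3⟩ := h δ hδ
  exact ⟨r, ⟨h1, h2⟩, h3⟩

/-- The scale-invariant perimeter density `r·P(E,B(x,r))/μ(B(x,r))`. -/
abbrev perimeterDensity {X : Type u} [PseudoMetricSpace X] [MeasurableSpace X]
    (μ : Measure X) (E : Set X) (x : X) (r : ℝ) : ℝ≥0∞ :=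
  ENNReal.ofReal r * perimeterOn μ E (ball x r) / μ (ball x r)

variable {X : Type u} [PseudoMetricSpace X] [MeasurableSpace X] {μ : Measure X} {Cd : ℝ≥0}

lemma IsDoublingWith.perimeterDensity_mul (hD : IsDoublingWith μ Cd) (E : Set X) (x : X) {r : ℝ}
    (hr : 0 < r) : perimeterDensity μ E x r * μ (ball x r) =
      ENNReal.ofReal r * perimeterOn μ E (ball x r) :=
  ENNReal.div_mul_cancel (hD.ball_pos x hr).ne' (hD.ball_lt_top x r).ne

lemma IsDoublingWith.perimeterDensity_le (hD : IsDoublingWith μ Cd) (E : Set X) (x : X) {r r' : ℝ}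
    (hr : 0 < r) (h1 : r / 2 ≤ r') (h2 : r' ≤ r) :
    perimeterDensity μ E x r' ≤ Cd * perimeterDensity μ E x r := by
  have hr' : 0 < r' := by linarith
  rw [ENNReal.div_le_iff (hD.ball_pos x hr').ne' (hD.ball_lt_top x r').ne]
  calc ENNReal.ofReal r' * perimeterOn μ E (ball x r') ≤
      ENNReal.ofReal r * perimeterOn μ E (ball x r) :=
        mul_le_mul' (ENNReal.ofReal_le_ofReal h2) (totVarOn_mono _ (ball_subset_ball h2))
    _ = perimeterDensity μ E x r * μ (ball x r) := (hD.perimeterDensity_mul E x hr).symm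
    _ ≤ perimeterDensity μ E x r * (Cd * μ (ball x r')) := by
        refine mul_le_mul_right ?_ _
        have := hD.ball_le_of_subset hr' 1 (ball_subset_ball (x := x) (by linarith : r ≤ 2 ^ 1 * r'))
        rwa [pow_one] at this
    _ = _ := by ring

lemma IsDoublingWith.ball_div_le (hD : IsDoublingWith μ Cd) {E : Set X} {x : X} {r : ℝ}
    (hr : 0 < r) {t : ℝ≥0∞} (ht : t ≠ 0) (ht' : t ≠ ⊤) (h : t ≤ perimeterDensity μ E x r) :
    μ (ball x r) / ENNReal.ofReal r ≤ t⁻¹ * perimeterOn μ E (ball x r) := by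
  have hr0 : ENNReal.ofReal r ≠ 0 := (ENNReal.ofReal_pos.2 hr).ne'
  rw [ENNReal.div_le_iff hr0 ENNReal.ofReal_ne_top]
  have h1 := mul_le_mul_left h (μ (ball x r))
  rw [hD.perimeterDensity_mul E x hr] at h1
  calc μ (ball x r) = t⁻¹ * (t * μ (ball x r)) := by
        rw [← mul_assoc, ENNReal.inv_mul_cancel ht ht', one_mul]
    _ ≤ t⁻¹ * (ENNReal.ofReal r * perimeterOn μ E (ball x r)) := mul_le_mul_right h1 _
    _ = _ := by ring

lemma perimeterDensity_compl (E : Set X) : perimeterDensity μ Eᶜ = perimeterDensity μ E := by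
  funext x r
  simp only [perimeterDensity, perimeterOn, totVarOn_indicator_compl]

lemma IsDoublingWith.measure_inter_div_le (hD : IsDoublingWith μ Cd) (F : Set X) (x : X)
    {r r' : ℝ} (hr : 0 < r) (h1 : r / 2 ≤ r') (h2 : r' ≤ r) :
    μ (F ∩ ball x r') / μ (ball x r') ≤ Cd * (μ (F ∩ ball x r) / μ (ball x r)) := by
  have hr' : 0 < r' := by linarith
  have hb := hD.ball_pos x hr
  have hbt := hD.ball_lt_top x r
  rw [ENNReal.div_le_iff (hD.ball_pos x hr').ne' (hD.ball_lt_top x r').ne]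
  calc μ (F ∩ ball x r') ≤ μ (F ∩ ball x r) := by gcongr
    _ = μ (F ∩ ball x r) / μ (ball x r) * μ (ball x r) :=
        (ENNReal.div_mul_cancel hb.ne' hbt.ne).symm
    _ ≤ μ (F ∩ ball x r) / μ (ball x r) * (Cd * μ (ball x r')) := by
        gcongr
        have := hD.ball_le_of_subset hr' 1
          (ball_subset_ball (x := x) (by linarith : r ≤ 2 ^ 1 * r'))
        rwa [pow_one] at this
    _ = _ := by ring

lemma IsDoublingWith.perimeterOn_le_of_perimeterDensity_le (hD : IsDoublingWith μ Cd) {E : Set X}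
    {x : X} {r : ℝ} (hr : 0 < r) (h : perimeterDensity μ E x (4 * r) ≤ 4 * perimeterDensity μ E x r) :
    perimeterOn μ E (ball x (4 * r)) ≤ Cd ^ 2 * perimeterOn μ E (ball x r) := by
  have hr4 : 0 < 4 * r := by positivity
  rw [← ENNReal.mul_le_mul_iff_right (ENNReal.ofReal_pos.2 hr4).ne' ENNReal.ofReal_ne_top]
  calc ENNReal.ofReal (4 * r) * perimeterOn μ E (ball x (4 * r))
      = perimeterDensity μ E x (4 * r) * μ (ball x (4 * r)) :=
        (hD.perimeterDensity_mul E x hr4).symm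
    _ ≤ 4 * perimeterDensity μ E x r * (Cd ^ 2 * μ (ball x r)) := by
        refine mul_le_mul' h (hD.ball_le_of_subset hr 2 (ball_subset_ball ?_))
        norm_num
    _ = 4 * Cd ^ 2 * (perimeterDensity μ E x r * μ (ball x r)) := by ring
    _ = 4 * Cd ^ 2 * (ENNReal.ofReal r * perimeterOn μ E (ball x r)) := by
        rw [hD.perimeterDensity_mul E x hr]
    _ = _ := by
        rw [ENNReal.ofReal_mul (by norm_num), ENNReal.ofReal_ofNat]
        ring

end Density

section UpperBound

variable {X : Type u} [MetricSpace X] [MeasurableSpace X] [BorelSpace X] {μ : Measure X} {Cd : ℝ≥0}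

lemma codimOneH_lt_limsup_perimeterDensity_of_lt [Nonempty X] (hD : IsDoublingWith μ Cd)
    (hCd : 1 ≤ Cd) {E : Set X} (hE : NullMeasurableSet E μ) (hfin : perimeterOn μ E univ ≠ ⊤)
    {t : ℝ≥0} (ht : Cd < t) :
    codimOneH μ {x | (t:ℝ≥0∞) < limsup (perimeterDensity μ E x) (𝓝[>] 0)} = 0 := by
  have hC0 : 0 < Cd := one_pos.trans_le hCd
  have ht0 : t ≠ 0 := (hC0.trans ht).ne'
  set l : ℝ≥0 := (Cd + t) / (2 * Cd) with hl
  have hlC : l * Cd = (Cd + t) / 2 := by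
    rw [hl]; field_simp
  have hl1 : 1 < l := by
    rw [hl, lt_div_iff₀ (by positivity), one_mul, two_mul]
    exact add_lt_add_right ht _
  have hlt : l * Cd / t < 1 := by
    rw [div_lt_one (hC0.trans ht), hlC, div_lt_iff₀ two_pos, mul_two]
    exact add_lt_add_left ht _
  refine codimOneH_eq_zero_of_frequently hD hE hfin (l := l) (t := (l * Cd / t : ℝ≥0))
    (K := (t:ℝ≥0∞)⁻¹) (by exact_mod_cast hl1) (by exact_mod_cast hlt) (by simpa using ht0) ?_
  intro x hx δ hδ
  have hx' : (t:ℝ≥0∞) < limsup (perimeterDensity μ E x) (𝓝[>] 0) := hx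
  obtain ⟨r, hr, hrδ, h⟩ :=
    (frequently_lt_of_lt_limsup (by isBoundedDefault) hx').exists_pos_lt hδ
  have h1 := hD.ball_div_le hr (by exact_mod_cast ht0) ENNReal.coe_ne_top h.le
  refine ⟨r, hr, hrδ, h1, ?_⟩
  calc ENNReal.ofReal (l / r) * μ (E ∩ ball x (2 * r))
      ≤ (l / ENNReal.ofReal r) * (Cd * μ (ball x r)) := by
        rw [ENNReal.ofReal_div_of_pos hr, ENNReal.ofReal_coe_nnreal]
        exact mul_le_mul_right ((measure_mono inter_subset_right).trans (hD x r hr).2.1) _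
    _ = l * Cd * (μ (ball x r) / ENNReal.ofReal r) := by
        simp only [div_eq_mul_inv]; ring
    _ ≤ l * Cd * ((t:ℝ≥0∞)⁻¹ * perimeterOn μ E (ball x r)) := mul_le_mul_right h1 _
    _ = _ := by
        rw [ENNReal.coe_div ht0, ENNReal.coe_mul, ← mul_assoc, div_eq_mul_inv]

lemma codimOneH_lt_limsup_perimeterDensity [Nonempty X] (hD : IsDoublingWith μ Cd)
    (hCd : 1 ≤ Cd) {E : Set X} (hE : NullMeasurableSet E μ) (hfin : perimeterOn μ E univ ≠ ⊤) :
    codimOneH μ {x | (Cd:ℝ≥0∞) < limsup (perimeterDensity μ E x) (𝓝[>] 0)} = 0 := by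
  refine le_antisymm ?_ bot_le
  rw [← codimOneH_iUnion_eq_zero fun n : ℕ => codimOneH_lt_limsup_perimeterDensity_of_lt hD hCd hE
    hfin (lt_add_of_pos_right Cd (by positivity : 0 < 1 / ((n:ℝ≥0) + 1)))]
  refine codimOneH_mono fun x hx => ?_
  obtain ⟨q, hq1, hq2⟩ := ENNReal.lt_iff_exists_nnreal_btwn.1
    (show (Cd:ℝ≥0∞) < limsup (perimeterDensity μ E x) (𝓝[>] 0) from hx)
  rw [ENNReal.coe_lt_coe] at hq1
  obtain ⟨n, hn⟩ := exists_nat_one_div_lt (tsub_pos_of_lt hq1)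
  refine mem_iUnion.2 ⟨n, lt_of_le_of_lt ?_ hq2⟩
  rw [ENNReal.coe_le_coe]
  exact (add_le_add_right hn.le _).trans (add_tsub_cancel_of_le hq1.le).le

end UpperBound

section Gain

variable {X : Type u} [MetricSpace X] [MeasurableSpace X] [BorelSpace X] {μ : Measure X}
  {Cd : ℝ≥0} {CP : ℝ}

lemma IsDoublingWith.ae_exists_density (hD : IsDoublingWith μ Cd) {E : Set X}
    (hE : NullMeasurableSet E μ) {r : ℝ} (hr : 0 < r) :
    ∀ᵐ y ∂μ, y ∈ E → ∃ j : ℕ,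
      μ (closedBall y (r / 2 ^ j)) < 2 * μ (E ∩ closedBall y (r / 2 ^ j)) := by
  have := hD.isLocallyFiniteMeasure
  have := hD.isUnifLocDoublingMeasure
  have := hD.secondCountableTopology
  rw [← ae_restrict_iff'₀ hE]
  filter_upwards [IsUnifLocDoublingMeasure.ae_tendsto_measure_inter_div μ E 1] with y hy
  have hpos : ∀ j : ℕ, 0 < r / 2 ^ j := fun j => by positivity
  have hlim : Tendsto (fun j : ℕ => r / 2 ^ j) atTop (𝓝[>] 0) := by
    refine tendsto_nhdsWithin_iff.2 ⟨?_, Eventually.of_forall hpos⟩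
    have := (tendsto_pow_atTop_nhds_zero_of_lt_one (r := (1 / 2 : ℝ)) (by norm_num)
      (by norm_num)).const_mul r
    simpa [div_eq_mul_inv] using this
  have h := hy (fun _ : ℕ => y) (fun j => r / 2 ^ j) hlim
    (Eventually.of_forall fun j => mem_closedBall_self (by rw [one_mul]; exact (hpos j).le))
  obtain ⟨j, hj⟩ := (h.eventually_const_lt (ENNReal.inv_lt_one.2 ENNReal.one_lt_two)).exists
  refine ⟨j, ?_⟩
  have hb0 : μ (closedBall y (r / 2 ^ j)) ≠ 0 :=
    ((hD.ball_pos y (hpos j)).trans_le (measure_mono ball_subset_closedBall)).ne'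
  have hbt : μ (closedBall y (r / 2 ^ j)) ≠ ⊤ :=
    ((measure_mono (closedBall_subset_ball (lt_add_one _))).trans_lt (hD.ball_lt_top y _)).ne
  rw [ENNReal.lt_div_iff_mul_lt (Or.inl hb0) (Or.inl hbt), mul_comm, ← div_eq_mul_inv,
    ENNReal.div_lt_iff (Or.inl two_ne_zero) (Or.inl ENNReal.ofNat_ne_top)] at hj
  rwa [mul_comm]

lemma exists_ball_le_perimeterOn (hP : SupportsPoincare μ CP) (hCP : 0 < CP)
    (hD : IsDoublingWith μ Cd) (hCd : 1 ≤ Cd) {E : Set X} (hE : NullMeasurableSet E μ) {x y : X}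
    {r : ℝ} (hr : 0 < r) {n : ℕ}
    (hsmall : 2 * (Cd:ℝ≥0∞) ^ (n + 3) * μ (E ∩ ball x (4 * r)) ≤ μ (ball x (4 * r)))
    (hy : y ∈ ball x (2 * r))
    (hj : ∃ j : ℕ, μ (closedBall y (r / 2 ^ j)) < 2 * μ (E ∩ closedBall y (r / 2 ^ j))) :
    ∃ s : ℝ, 0 < s ∧ s ≤ 2 * r / 2 ^ n ∧ μ (ball y s) ≤
      2 * (Cd:ℝ≥0∞) ^ 2 * (ENNReal.ofReal (CP * s) * perimeterOn μ E (ball y (2 * s))) := by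
  classical
  have hC1 : (1:ℝ≥0∞) ≤ Cd := by exact_mod_cast hCd
  have hC0 : (Cd:ℝ≥0∞) ≠ 0 := (one_pos.trans_le hC1).ne'
  have hpos : ∀ j : ℕ, 0 < r / 2 ^ j := fun j => by positivity
  obtain ⟨hj1, hj2⟩ := And.intro (Nat.find_spec hj) fun i (hi : i < Nat.find hj) =>
    Nat.find_min hj hi
  generalize Nat.find hj = j at hj1 hj2
  have hnj : n < j := by
    by_contra! hjn
    refine lt_irrefl (μ (ball x (4 * r))) ?_
    have hle : r / 2 ^ j ≤ r := div_le_self hr.le (one_le_pow₀ one_le_two)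
    rw [mem_ball] at hy
    calc μ (ball x (4 * r)) ≤ (Cd:ℝ≥0∞) ^ (j + 3) * μ (ball y (r / 2 ^ j)) := by
          refine hD.ball_le_of_subset (hpos j) (j + 3) (ball_subset_ball' ?_)
          have e : (2:ℝ) ^ (j + 3) * (r / 2 ^ j) = 8 * r := by
            rw [pow_add]; field_simp; norm_num
          rw [e, dist_comm]
          linarith
      _ ≤ (Cd:ℝ≥0∞) ^ (n + 3) * μ (closedBall y (r / 2 ^ j)) :=
          mul_le_mul' (pow_le_pow_right₀ hC1 (by lia)) (measure_mono ball_subset_closedBall)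
      _ < (Cd:ℝ≥0∞) ^ (n + 3) * (2 * μ (E ∩ closedBall y (r / 2 ^ j))) :=
          ENNReal.mul_lt_mul_right (pow_ne_zero _ hC0) (by simp) hj1
      _ ≤ (Cd:ℝ≥0∞) ^ (n + 3) * (2 * μ (E ∩ ball x (4 * r))) := by
          gcongr
          refine (closedBall_subset_ball (ε₂ := 2 * r) (by linarith)).trans (ball_subset_ball' ?_)
          linarith
      _ = 2 * (Cd:ℝ≥0∞) ^ (n + 3) * μ (E ∩ ball x (4 * r)) := by ring
      _ ≤ _ := hsmall
  obtain ⟨i, rfl⟩ : ∃ i, j = i + 1 := ⟨j - 1, by lia⟩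
  have hi := not_lt.1 (hj2 i (Nat.lt_succ_self i))
  have hsi : 2 * r / 2 ^ i = 2 ^ 1 * (r / 2 ^ i) := by ring
  have hsi' : 2 * r / 2 ^ i = 2 ^ 2 * (r / 2 ^ (i + 1)) := by rw [pow_succ _ i]; field_simp
  have hsub : closedBall y (r / 2 ^ i) ⊆ ball y (2 * r / 2 ^ i) :=
    closedBall_subset_ball (by have := hpos i; rw [hsi]; linarith)
  have hsub' : closedBall y (r / 2 ^ (i + 1)) ⊆ ball y (2 * r / 2 ^ i) :=
    closedBall_subset_ball (by have := hpos (i + 1); rw [hsi']; linarith)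
  have hcompl : μ (closedBall y (r / 2 ^ i)) ≤ 2 * μ (Eᶜ ∩ closedBall y (r / 2 ^ i)) := by
    have hbt : μ (closedBall y (r / 2 ^ i)) ≠ ⊤ :=
      ((measure_mono hsub).trans_lt (hD.ball_lt_top y _)).ne
    rw [← ENNReal.add_le_add_iff_left hbt, ← two_mul]
    have h := measure_le_inter_add_sdiff μ (closedBall y (r / 2 ^ i)) E
    rw [inter_comm, Set.sdiff_eq, inter_comm _ Eᶜ] at h
    calc _ ≤ 2 * (μ (E ∩ closedBall y (r / 2 ^ i)) + μ (Eᶜ ∩ closedBall y (r / 2 ^ i))) := by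
          gcongr
      _ ≤ _ := by rw [mul_add]; gcongr
  refine ⟨2 * r / 2 ^ i, by positivity, ?_, ?_⟩
  · gcongr
    · norm_num
    · lia
  refine le_trans ?_ (mul_le_mul_right (min_measure_le_perimeterOn hP hCP hD hE y
    (by positivity : 0 < 2 * r / 2 ^ i)) _)
  rw [mul_min]
  refine le_min ?_ ?_
  · calc μ (ball y (2 * r / 2 ^ i)) ≤ (Cd:ℝ≥0∞) ^ 2 * μ (ball y (r / 2 ^ (i + 1))) := by
          rw [hsi']; exact hD.ball_le y (hpos _) 2
      _ ≤ (Cd:ℝ≥0∞) ^ 2 * (2 * μ (E ∩ closedBall y (r / 2 ^ (i + 1)))) := by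
          gcongr
          exact (measure_mono ball_subset_closedBall).trans hj1.le
      _ ≤ (Cd:ℝ≥0∞) ^ 2 * (2 * μ (E ∩ ball y (2 * r / 2 ^ i))) := by gcongr
      _ = _ := by ring
  · calc μ (ball y (2 * r / 2 ^ i)) ≤ (Cd:ℝ≥0∞) ^ 1 * μ (ball y (r / 2 ^ i)) := by
          rw [hsi]; exact hD.ball_le y (hpos _) 1
      _ ≤ (Cd:ℝ≥0∞) ^ 2 * (2 * μ (Eᶜ ∩ closedBall y (r / 2 ^ i))) := by
          refine mul_le_mul' (pow_le_pow_right₀ hC1 one_le_two) ?_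
          exact (measure_mono ball_subset_closedBall).trans hcompl
      _ ≤ (Cd:ℝ≥0∞) ^ 2 * (2 * μ (Eᶜ ∩ ball y (2 * r / 2 ^ i))) := by gcongr
      _ = _ := by ring

/-- If `E` occupies a tiny fraction of a ball then the perimeter controls the measure of `E` in the
half ball with a small constant. -/
lemma measure_inter_ball_le_perimeterOn (hP : SupportsPoincare μ CP) (hCP : 0 < CP)
    (hD : IsDoublingWith μ Cd) (hCd : 1 ≤ Cd) {E : Set X} (hE : NullMeasurableSet E μ) {x : X}
    {r : ℝ} (hr : 0 < r) {n : ℕ} (hn : 1 ≤ n)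
    (hsmall : 2 * (Cd:ℝ≥0∞) ^ (n + 3) * μ (E ∩ ball x (4 * r)) ≤ μ (ball x (4 * r))) :
    μ (E ∩ ball x (2 * r)) ≤ 2 * (Cd:ℝ≥0∞) ^ 6 * ENNReal.ofReal (CP * (2 * r / 2 ^ n)) *
      perimeterOn μ E (ball x (4 * r)) := by
  have := hD.secondCountableTopology
  set G : Set X := {y ∈ E ∩ ball x (2 * r) | ∃ s : ℝ, 0 < s ∧ s ≤ 2 * r / 2 ^ n ∧ μ (ball y s) ≤
      2 * (Cd:ℝ≥0∞) ^ 2 * (ENNReal.ofReal (CP * s) * perimeterOn μ E (ball y (2 * s)))} with hG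
  have hEG : μ (E ∩ ball x (2 * r)) ≤ μ G := by
    refine measure_mono_ae ?_
    filter_upwards [hD.ae_exists_density hE hr] with y hy hyE
    exact ⟨hyE, exists_ball_le_perimeterOn hP hCP hD hCd hE hr hsmall hyE.2 (hy hyE.1)⟩
  refine hEG.trans ?_
  choose! s hs0 hsr hs using fun y (hy : y ∈ G) => hy.2
  have hsr' : ∀ y ∈ G, s y ≤ r := fun y hy => by
    refine (hsr y hy).trans ((div_le_iff₀ (by positivity)).2 ?_)
    rw [mul_comm]
    exact mul_le_mul_of_nonneg_left (by simpa using pow_le_pow_right₀ (one_le_two (α := ℝ)) hn) hr.le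
  obtain ⟨u, huG, hu, hucov⟩ := Vitali.exists_disjoint_subfamily_covering_enlargement_closedBall
    G (fun y => y) (fun y => 2 * s y) (2 * r) (fun y hy => by have := hsr' y hy; linarith) 5
    (by norm_num)
  have hud : u.PairwiseDisjoint fun y => ball y (2 * s y) :=
    hu.mono fun y => ball_subset_closedBall
  have huc : u.Countable := hud.countable_of_isOpen (fun _ _ => isOpen_ball)
    fun y hy => nonempty_ball.2 (by have := hs0 y (huG hy); positivity)
  have : Countable u := huc
  have hcov : G ⊆ ⋃ i : u, ball (i:X) (16 * s i) := fun y hy => by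
    obtain ⟨b, hb, hsub⟩ := hucov y hy
    have := hs0 b (huG hb)
    have := hs0 y hy
    exact mem_iUnion.2 ⟨⟨b, hb⟩, closedBall_subset_ball (by linarith)
      (hsub (mem_closedBall_self (by positivity)))⟩
  calc μ G ≤ ∑' i : u, μ (ball (i:X) (16 * s i)) := (measure_mono hcov).trans (measure_iUnion_le _)
    _ ≤ ∑' i : u, 2 * (Cd:ℝ≥0∞) ^ 6 * ENNReal.ofReal (CP * (2 * r / 2 ^ n)) *
          perimeterOn μ E (ball (i:X) (2 * s i)) := by
        refine ENNReal.tsum_le_tsum fun i => ?_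
        have hi := huG i.2
        calc μ (ball (i:X) (16 * s i)) ≤ (Cd:ℝ≥0∞) ^ 4 * μ (ball (i:X) (s i)) := by
              have := hD.ball_le (i:X) (hs0 i hi) 4
              norm_num at this
              exact this
          _ ≤ (Cd:ℝ≥0∞) ^ 4 * (2 * (Cd:ℝ≥0∞) ^ 2 * (ENNReal.ofReal (CP * (2 * r / 2 ^ n)) *
                perimeterOn μ E (ball (i:X) (2 * s i)))) := by
              gcongr
              refine (hs i hi).trans ?_
              gcongr
              exact hsr i hi
          _ = _ := by ring
    _ ≤ _ := by
        rw [ENNReal.tsum_mul_left]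
        gcongr
        refine tsum_totVarOn_le_of_subset _ _ (fun _ => isOpen_ball)
          (fun i j hij => hud i.2 j.2 (Subtype.coe_injective.ne hij)) fun i => ball_subset_ball' ?_
        have h1 := hsr' i (huG i.2)
        have h2 := mem_ball.1 (huG i.2).1.2
        linarith

end Gain

section Scales

lemma forall_le_of_doubling_of_min_le {d d' : ℝ → ℝ≥0∞} {C κ : ℝ≥0∞}
    (hd : ∀ r r' : ℝ, 0 < r → r / 2 ≤ r' → r' ≤ r → d r' ≤ C * d r)
    (hsum : ∀ r : ℝ, 0 < r → 1 ≤ d r + d' r) (hκ : C * κ + κ < 1) {s₁ : ℝ} (hs₁ : 0 < s₁)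
    (hmin : ∀ s : ℝ, 0 < s → s ≤ s₁ → d s ≤ κ ∨ d' s ≤ κ) (h : d s₁ ≤ κ) {s : ℝ} (hs : 0 < s)
    (hss₁ : s ≤ s₁) : d s ≤ κ := by
  have key : ∀ (k : ℕ) (s : ℝ), 0 < s → s₁ / 2 ^ k ≤ s → s ≤ s₁ → d s ≤ κ := by
    intro k
    induction k with
    | zero =>
      intro s _ h1 h2
      rw [pow_zero, div_one] at h1
      rwa [le_antisymm h2 h1]
    | succ k ih =>
      intro s hs h1 h2
      have h3 : d (min (2 * s) s₁) ≤ κ := by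
        refine ih _ (lt_min (by positivity) hs₁) (le_min ?_ ?_) (min_le_right _ _)
        · rw [pow_succ, ← div_div] at h1
          linarith
        · exact div_le_self hs₁.le (one_le_pow₀ one_le_two)
      have h4 : d s ≤ C * κ := by
        refine (hd (min (2 * s) s₁) s (lt_min (by positivity) hs₁) ?_ (le_min (by linarith) h2)).trans
          (mul_le_mul_right h3 _)
        linarith [min_le_left (2 * s) s₁]
      refine (hmin s hs h2).resolve_right fun h5 => ?_
      exact (((hsum s hs).trans (add_le_add h4 h5)).trans_lt hκ).false
  obtain ⟨k, hk⟩ := exists_pow_lt_of_lt_one (div_pos hs hs₁) (by norm_num : (1 / 2 : ℝ) < 1)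
  refine key k s hs ?_ hss₁
  rw [lt_div_iff₀ hs₁, one_div, inv_pow] at hk
  rw [div_eq_inv_mul]
  exact hk.le

lemma tendsto_zero_or_of_tendsto_min {d d' : ℝ → ℝ≥0∞} {C : ℝ≥0∞} (hC : 1 ≤ C) (hCt : C ≠ ⊤)
    (hd : ∀ r r' : ℝ, 0 < r → r / 2 ≤ r' → r' ≤ r → d r' ≤ C * d r)
    (hd' : ∀ r r' : ℝ, 0 < r → r / 2 ≤ r' → r' ≤ r → d' r' ≤ C * d' r)
    (hsum : ∀ r : ℝ, 0 < r → 1 ≤ d r + d' r)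
    (hmin : Tendsto (fun r => min (d r) (d' r)) (𝓝[>] 0) (𝓝 0)) :
    Tendsto d (𝓝[>] 0) (𝓝 0) ∨ Tendsto d' (𝓝[>] 0) (𝓝 0) := by
  have hC1 : C + 1 ≠ ⊤ := by simp [hCt]
  have hC0 : C + 1 ≠ 0 := by simp
  set κ : ℝ≥0∞ := (C + 1)⁻¹ / 2 with hκdef
  have hκ0 : 0 < κ := ENNReal.half_pos (ENNReal.inv_ne_zero.2 hC1)
  have hκ : C * κ + κ < 1 := by
    rw [← add_one_mul, hκdef, ← mul_div_assoc, ENNReal.mul_inv_cancel hC0 hC1]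
    exact ENNReal.half_lt_self one_ne_zero ENNReal.one_ne_top
  obtain ⟨s₀, hs₀, hs⟩ := mem_nhdsGT_iff_exists_Ioo_subset.1 (hmin.eventually_le_const hκ0)
  have hs₀' : (0:ℝ) < s₀ / 2 := half_pos hs₀
  have hm : ∀ s : ℝ, 0 < s → s ≤ s₀ / 2 → d s ≤ κ ∨ d' s ≤ κ := fun s h1 h2 =>
    min_le_iff.1 (hs ⟨h1, by linarith⟩)
  have hfinal : ∀ e e' : ℝ → ℝ≥0∞, (∀ r : ℝ, 0 < r → 1 ≤ e r + e' r) →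
      Tendsto (fun r => min (e r) (e' r)) (𝓝[>] 0) (𝓝 0) →
      (∀ s : ℝ, 0 < s → s ≤ s₀ / 2 → e s ≤ κ) → Tendsto e (𝓝[>] 0) (𝓝 0) := by
    intro e e' he1 he2 he3
    refine he2.congr' ?_
    filter_upwards [Ioo_mem_nhdsGT hs₀'] with s hs
    refine min_eq_left (le_of_not_gt fun hlt => ?_)
    have h1 := he3 s hs.1 hs.2.le
    refine (((he1 s hs.1).trans (add_le_add h1 (hlt.le.trans h1))).trans_lt
      (lt_of_le_of_lt ?_ hκ)).false
    gcongr
    exact le_mul_of_one_le_left' hC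
  rcases hm _ hs₀' le_rfl with h | h
  · exact Or.inl (hfinal d d' hsum hmin fun s h1 h2 =>
      forall_le_of_doubling_of_min_le hd hsum hκ hs₀' hm h h1 h2)
  · have hsum' : ∀ r : ℝ, 0 < r → 1 ≤ d' r + d r := fun r hr => by
      rw [add_comm]
      exact hsum r hr
    exact Or.inr (hfinal d' d hsum' (by simpa only [min_comm] using hmin) fun s h1 h2 =>
      forall_le_of_doubling_of_min_le hd' hsum' hκ hs₀' (fun s h1 h2 => (hm s h1 h2).symm) h h1 h2)

lemma exists_radius_of_liminf_lt {ρ : ℝ → ℝ≥0∞} {C c : ℝ≥0∞} (hC : 1 ≤ C) (hCt : C ≠ ⊤)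
    (hc : c ≠ 0) (hct : c ≠ ⊤) (hρ : ∀ r r' : ℝ, 0 < r → r / 2 ≤ r' → r' ≤ r → ρ r' ≤ C * ρ r)
    (hinf : liminf ρ (𝓝[>] 0) < c) (hsup : limsup ρ (𝓝[>] 0) ≠ 0) :
    ∃ t : ℝ≥0∞, t ≠ 0 ∧ ∀ δ : ℝ, 0 < δ → ∃ r : ℝ, 0 < r ∧ r < δ ∧ ρ (8 * r) ≤ 2 * (C ^ 4 * c) ∧
      ρ (4 * r) ≤ 4 * ρ r ∧ t ≤ ρ r := by
  have hC0 : C ≠ 0 := (one_pos.trans_le hC).ne'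
  set L := limsup ρ (𝓝[>] 0) with hL
  set T := C ^ 3 * c with hT
  have hCT : C * T = C ^ 4 * c := by rw [hT]; ring
  have hTt : T ≠ ⊤ := ENNReal.mul_ne_top (ENNReal.pow_ne_top hCt) hct
  rcases le_or_gt L (C * T) with hLT | hLT
  · have hLt : L ≠ ⊤ := ne_top_of_le_ne_top (ENNReal.mul_ne_top hCt hTt) hLT
    have hL2 : L < 2 * L := by
      rw [two_mul]
      exact ENNReal.lt_add_right hLt hsup
    refine ⟨L / 2, (ENNReal.half_pos hsup).ne', fun δ hδ => ?_⟩
    obtain ⟨δ₀, hδ₀, hev⟩ := mem_nhdsGT_iff_exists_Ioo_subset.1 (eventually_lt_of_limsup_lt hL2)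
    have hδ₀' : (0:ℝ) < δ₀ := hδ₀
    obtain ⟨r, hr, hrδ, h⟩ := (frequently_lt_of_lt_limsup (by isBoundedDefault)
      (hL ▸ ENNReal.half_lt_self hsup hLt : L / 2 < limsup ρ (𝓝[>] 0))).exists_pos_lt
      (lt_min hδ (by positivity : 0 < δ₀ / 8))
    have hr1 := hrδ.trans_le (min_le_left _ _)
    have hr2 := hrδ.trans_le (min_le_right _ _)
    have h8 : ρ (8 * r) < 2 * L := hev ⟨by positivity, by linarith⟩
    have h4 : ρ (4 * r) < 2 * L := hev ⟨by positivity, by linarith⟩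
    refine ⟨r, hr, hr1, ?_, ?_, h.le⟩
    · rw [← hCT]
      exact h8.le.trans (mul_le_mul_right hLT _)
    · refine h4.le.trans ?_
      calc 2 * L = 4 * (L / 2) := by
            rw [show (4:ℝ≥0∞) = 2 * 2 by norm_num, mul_assoc,
              ENNReal.mul_div_cancel two_ne_zero ENNReal.ofNat_ne_top]
        _ ≤ 4 * ρ r := mul_le_mul_right h.le _
  · refine ⟨T, mul_ne_zero (pow_ne_zero _ hC0) hc, fun δ hδ => ?_⟩
    obtain ⟨r₀, hr₀, hrδ, h₀⟩ :=
      (frequently_lt_of_liminf_lt (by isBoundedDefault) hinf).exists_pos_lt hδ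
    obtain ⟨r', hr', hr'r, h'⟩ :=
      (frequently_lt_of_lt_limsup (by isBoundedDefault) hLT).exists_pos_lt hr₀
    have hstep : ∀ i : ℕ, ρ (r₀ / 2 ^ i) ≤ C ^ i * c := by
      intro i
      induction i with
      | zero => simpa using h₀.le
      | succ i ih =>
        rw [pow_succ, pow_succ', ← div_div, mul_assoc]
        have hpos : 0 < r₀ / 2 ^ i := by positivity
        exact (hρ _ _ hpos le_rfl (by linarith)).trans (mul_le_mul_right ih _)
    have hex : ∃ j : ℕ, T < ρ (r₀ / 2 ^ j) := by
      obtain ⟨j, hj1, hj2⟩ := exists_nat_pow_near_of_lt_one (div_pos hr' hr₀)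
        ((div_le_one hr₀).2 hr'r.le) (by norm_num : (0:ℝ) < 1 / 2) (by norm_num)
      rw [one_div, inv_pow, lt_div_iff₀ hr₀, pow_succ] at hj1
      rw [one_div, inv_pow, div_le_iff₀ hr₀] at hj2
      refine ⟨j, lt_of_not_ge fun hle => (h'.trans_le ?_).false⟩
      refine (hρ (r₀ / 2 ^ j) r' (by positivity) ?_ ?_).trans (mul_le_mul_right hle _)
      · rw [div_div, div_eq_inv_mul]
        exact hj1.le
      · rwa [div_eq_inv_mul]
    classical
    obtain ⟨hj1, hj2⟩ := And.intro (Nat.find_spec hex) fun i (hi : i < Nat.find hex) =>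
      Nat.find_min hex hi
    generalize Nat.find hex = j at hj1 hj2
    have hj4 : 4 ≤ j := by
      by_contra! hj
      exact (hj1.trans_le ((hstep j).trans
        (mul_le_mul_left (pow_le_pow_right₀ hC (by lia : j ≤ 3)) c))).false
    obtain ⟨k, rfl⟩ := Nat.exists_eq_add_of_le' hj4
    have e8 : 8 * (r₀ / 2 ^ (k + 4)) = r₀ / 2 ^ (k + 1) := by
      rw [pow_add, pow_add]; field_simp; norm_num
    have e4 : 4 * (r₀ / 2 ^ (k + 4)) = r₀ / 2 ^ (k + 2) := by
      rw [pow_add, pow_add]; field_simp; norm_num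
    have h8 := not_lt.1 (hj2 (k + 1) (by lia))
    have h4 := not_lt.1 (hj2 (k + 2) (by lia))
    refine ⟨r₀ / 2 ^ (k + 4), by positivity,
      (div_le_self hr₀.le (one_le_pow₀ one_le_two)).trans_lt hrδ, ?_, ?_, hj1.le⟩
    · rw [e8, ← hCT]
      refine h8.trans ((le_mul_of_one_le_left' hC).trans (le_mul_of_one_le_left' one_le_two))
    · rw [e4]
      exact (h4.trans hj1.le).trans (le_mul_of_one_le_left' (by norm_num))

end Scales

section LowerBound

variable {X : Type u} [MetricSpace X] [MeasurableSpace X] [BorelSpace X] {μ : Measure X}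
  {Cd : ℝ≥0} {CP : ℝ}

lemma min_measure_le_perimeterDensity (hP : SupportsPoincare μ CP) (hCP : 0 < CP)
    (hD : IsDoublingWith μ Cd) {E : Set X} (hE : NullMeasurableSet E μ) (x : X) {s : ℝ}
    (hs : 0 < s) : min (μ (E ∩ ball x s)) (μ (Eᶜ ∩ ball x s)) ≤
      ENNReal.ofReal (CP / 2) * perimeterDensity μ E x (2 * s) * Cd * μ (ball x s) := by
  refine (min_measure_le_perimeterOn hP hCP hD hE x hs).trans ?_
  calc ENNReal.ofReal (CP * s) * perimeterOn μ E (ball x (2 * s))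
      = ENNReal.ofReal (CP / 2) * (ENNReal.ofReal (2 * s) * perimeterOn μ E (ball x (2 * s))) := by
        rw [← mul_assoc, ← ENNReal.ofReal_mul (by positivity)]
        congr 2
        ring
    _ = ENNReal.ofReal (CP / 2) * (perimeterDensity μ E x (2 * s) * μ (ball x (2 * s))) := by
        rw [hD.perimeterDensity_mul E x (by positivity)]
    _ ≤ ENNReal.ofReal (CP / 2) * (perimeterDensity μ E x (2 * s) * (Cd * μ (ball x s))) := by
        gcongr
        exact (hD x s hs).2.1
    _ = _ := by ring

lemma limsup_perimeterDensity_ne_zero (hP : SupportsPoincare μ CP) (hCP : 0 < CP)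
    (hD : IsDoublingWith μ Cd) (hCd : 1 ≤ Cd) {E : Set X} (hE : NullMeasurableSet E μ) {x : X}
    (hx : x ∈ measBdry μ E) : limsup (perimeterDensity μ E x) (𝓝[>] 0) ≠ 0 := by
  intro h0
  have hρ : Tendsto (perimeterDensity μ E x) (𝓝[>] 0) (𝓝 0) :=
    tendsto_of_le_liminf_of_limsup_le bot_le h0.le
  have h2 : Tendsto (fun s : ℝ => 2 * s) (𝓝[>] 0) (𝓝[>] 0) := by
    refine tendsto_nhdsWithin_iff.2 ⟨?_, ?_⟩
    · exact (tendsto_nhdsWithin_of_tendsto_nhds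
        (by simpa using (continuous_const_mul (2:ℝ)).tendsto 0))
    · filter_upwards [self_mem_nhdsWithin] with s (hs : 0 < s)
      exact mul_pos two_pos hs
  have hmin : Tendsto (fun s => min (μ (E ∩ ball x s) / μ (ball x s))
      (μ (Eᶜ ∩ ball x s) / μ (ball x s))) (𝓝[>] 0) (𝓝 0) := by
    have hlim : Tendsto (fun s : ℝ => ENNReal.ofReal (CP / 2) * perimeterDensity μ E x (2 * s) * Cd)
        (𝓝[>] 0) (𝓝 0) := by
      have := ENNReal.Tendsto.mul_const (b := (Cd:ℝ≥0∞)) (ENNReal.Tendsto.const_mul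
        (a := ENNReal.ofReal (CP / 2)) (hρ.comp h2) (Or.inr ENNReal.ofReal_ne_top))
        (Or.inr ENNReal.coe_ne_top)
      simpa using this
    refine tendsto_of_tendsto_of_tendsto_of_le_of_le' tendsto_const_nhds hlim
      (Eventually.of_forall fun _ => bot_le) ?_
    filter_upwards [self_mem_nhdsWithin] with s (hs : 0 < s)
    have h := min_measure_le_perimeterDensity hP hCP hD hE x hs
    have hb := (hD.ball_pos x hs).ne'
    have hbt := (hD.ball_lt_top x s).ne
    rw [min_le_iff] at h ⊢
    exact h.imp (ENNReal.div_le_iff hb hbt).2 (ENNReal.div_le_iff hb hbt).2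
  rcases tendsto_zero_or_of_tendsto_min (by exact_mod_cast hCd : (1:ℝ≥0∞) ≤ Cd) ENNReal.coe_ne_top
    (fun r r' => hD.measure_inter_div_le E x) (fun r r' => hD.measure_inter_div_le Eᶜ x)
    (fun r hr => by
      have hb := (hD.ball_pos x hr).ne'
      have hbt := (hD.ball_lt_top x r).ne
      rw [← ENNReal.add_div, ENNReal.le_div_iff_mul_le (Or.inl hb) (Or.inl hbt), one_mul]
      have h := measure_le_inter_add_sdiff μ (ball x r) E
      rwa [inter_comm, Set.sdiff_eq, inter_comm _ Eᶜ] at h) hmin with h | h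
  · exact hx.1.ne' h.limsup_eq
  · exact hx.2.ne' h.limsup_eq

lemma ofReal_mul_measure_inter_ball_le (hP : SupportsPoincare μ CP) (hCP : 0 < CP)
    (hD : IsDoublingWith μ Cd) (hCd : 1 ≤ Cd) {E : Set X} (hE : NullMeasurableSet E μ) {x : X}
    {r : ℝ} (hr : 0 < r) {n : ℕ} (hn : 1 ≤ n) (hnC : 16 * (Cd:ℝ) ^ 8 * CP ≤ 2 ^ n)
    (hsmall : 2 * (Cd:ℝ≥0∞) ^ (n + 3) * μ (E ∩ ball x (4 * r)) ≤ μ (ball x (4 * r)))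
    (h4 : perimeterDensity μ E x (4 * r) ≤ 4 * perimeterDensity μ E x r) :
    ENNReal.ofReal (2 / r) * μ (E ∩ ball x (2 * r)) ≤ 2⁻¹ * perimeterOn μ E (ball x r) := by
  have hconst : ENNReal.ofReal (2 / r) * (2 * (Cd:ℝ≥0∞) ^ 6 *
      ENNReal.ofReal (CP * (2 * r / 2 ^ n))) * Cd ^ 2 ≤ 2⁻¹ := by
    have h2 : (2:ℝ≥0∞) = ENNReal.ofReal 2 := by simp
    rw [← ENNReal.ofReal_coe_nnreal (p := Cd), h2, ← ENNReal.ofReal_inv_of_pos two_pos,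
      ← ENNReal.ofReal_pow (by positivity), ← ENNReal.ofReal_pow (by positivity),
      ← ENNReal.ofReal_mul (by positivity), ← ENNReal.ofReal_mul (by positivity),
      ← ENNReal.ofReal_mul (by positivity), ← ENNReal.ofReal_mul (by positivity)]
    refine ENNReal.ofReal_le_ofReal ?_
    have e : 2 / r * (2 * (Cd:ℝ) ^ 6 * (CP * (2 * r / 2 ^ n))) * Cd ^ 2 =
        16 * (Cd:ℝ) ^ 8 * CP / 2 ^ n / 2 := by
      field_simp
      norm_num
    rw [e, inv_eq_one_div]
    gcongr
    exact (div_le_one (by positivity)).2 hnC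
  calc ENNReal.ofReal (2 / r) * μ (E ∩ ball x (2 * r))
      ≤ ENNReal.ofReal (2 / r) * (2 * (Cd:ℝ≥0∞) ^ 6 * ENNReal.ofReal (CP * (2 * r / 2 ^ n)) *
        (Cd ^ 2 * perimeterOn μ E (ball x r))) := by
        gcongr
        exact (measure_inter_ball_le_perimeterOn hP hCP hD hCd hE hr hn hsmall).trans
          (mul_le_mul_right (hD.perimeterOn_le_of_perimeterDensity_le hr h4) _)
    _ = ENNReal.ofReal (2 / r) * (2 * (Cd:ℝ≥0∞) ^ 6 *
        ENNReal.ofReal (CP * (2 * r / 2 ^ n))) * Cd ^ 2 * perimeterOn μ E (ball x r) := by ring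
    _ ≤ _ := mul_le_mul_left hconst _

lemma codimOneH_frequently_measure_inter_le [Nonempty X] (hD : IsDoublingWith μ Cd) {E : Set X}
    (hE : NullMeasurableSet E μ) (hfin : perimeterOn μ E univ ≠ ⊤) {t : ℝ≥0∞} (ht : t ≠ 0)
    (ht' : t ≠ ⊤) :
    codimOneH μ {x | ∃ᶠ r in 𝓝[>] (0:ℝ), t ≤ perimeterDensity μ E x r ∧
      ENNReal.ofReal (2 / r) * μ (E ∩ ball x (2 * r)) ≤ 2⁻¹ * perimeterOn μ E (ball x r)} = 0 := by
  refine codimOneH_eq_zero_of_frequently hD hE hfin (l := 2) (t := 2⁻¹) (K := t⁻¹) one_lt_two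
    (ENNReal.inv_lt_one.2 ENNReal.one_lt_two) (ENNReal.inv_ne_top.2 ht) fun x hx δ hδ => ?_
  obtain ⟨r, hr, hrδ, h1, h2⟩ := Filter.Frequently.exists_pos_lt hx hδ
  exact ⟨r, hr, hrδ, hD.ball_div_le hr ht ht' h1, h2⟩

lemma codimOneH_liminf_perimeterDensity_lt [Nonempty X] (hP : SupportsPoincare μ CP)
    (hCP : 0 < CP) (hD : IsDoublingWith μ Cd) (hCd : 1 ≤ Cd) {E : Set X}
    (hE : NullMeasurableSet E μ) (hfin : perimeterOn μ E univ ≠ ⊤) {n : ℕ} (hn : 1 ≤ n)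
    (hnC : 16 * (Cd:ℝ) ^ 8 * CP ≤ 2 ^ n) {c : ℝ} (hc : 0 < c)
    (hcn : 2 * CP * (Cd:ℝ) ^ (n + 8) * c ≤ 1) :
    codimOneH μ {x ∈ measBdry μ E | liminf (perimeterDensity μ E x) (𝓝[>] 0) <
      ENNReal.ofReal c} = 0 := by
  set A : Set X → ℕ → Set X := fun F m => {x | ∃ᶠ r in 𝓝[>] (0:ℝ),
    ((m + 1 : ℕ) : ℝ≥0∞)⁻¹ ≤ perimeterDensity μ F x r ∧
      ENNReal.ofReal (2 / r) * μ (F ∩ ball x (2 * r)) ≤ 2⁻¹ * perimeterOn μ F (ball x r)} with hA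
  have hA0 : ∀ F : Set X, NullMeasurableSet F μ → perimeterOn μ F univ ≠ ⊤ →
      ∀ m, codimOneH μ (A F m) = 0 := fun F hF hF' m =>
    codimOneH_frequently_measure_inter_le hD hF hF' (ENNReal.inv_ne_zero.2 (ENNReal.natCast_ne_top _))
      (ENNReal.inv_ne_top.2 (Nat.cast_ne_zero.2 m.succ_ne_zero))
  have hfin' : perimeterOn μ Eᶜ univ ≠ ⊤ := by
    rwa [perimeterOn, totVarOn_indicator_compl]
  refine le_antisymm ?_ bot_le
  rw [← codimOneH_iUnion_eq_zero fun m =>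
    codimOneH_union_eq_zero (hA0 E hE hfin m) (hA0 Eᶜ hE.compl hfin' m)]
  refine codimOneH_mono fun x ⟨hx, hxc⟩ => ?_
  obtain ⟨t, ht0, hgood⟩ := exists_radius_of_liminf_lt (by exact_mod_cast hCd : (1:ℝ≥0∞) ≤ Cd)
    ENNReal.coe_ne_top (ENNReal.ofReal_pos.2 hc).ne' ENNReal.ofReal_ne_top
    (fun r r' => hD.perimeterDensity_le E x) hxc
    (limsup_perimeterDensity_ne_zero hP hCP hD hCd hE hx)
  obtain ⟨m, hm⟩ := ENNReal.exists_inv_nat_lt ht0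
  have hmt : ((m + 1 : ℕ) : ℝ≥0∞)⁻¹ ≤ t :=
    (ENNReal.inv_le_inv.2 (by exact_mod_cast m.le_succ)).trans hm.le
  have hfreq : ∃ᶠ r in 𝓝[>] (0:ℝ),
      (((m + 1 : ℕ) : ℝ≥0∞)⁻¹ ≤ perimeterDensity μ E x r ∧
        ENNReal.ofReal (2 / r) * μ (E ∩ ball x (2 * r)) ≤ 2⁻¹ * perimeterOn μ E (ball x r)) ∨
      (((m + 1 : ℕ) : ℝ≥0∞)⁻¹ ≤ perimeterDensity μ Eᶜ x r ∧
        ENNReal.ofReal (2 / r) * μ (Eᶜ ∩ ball x (2 * r)) ≤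
          2⁻¹ * perimeterOn μ Eᶜ (ball x r)) := by
    refine frequently_nhdsGT_zero_of_forall fun δ hδ => ?_
    obtain ⟨r, hr, hrδ, h8, h4, ht⟩ := hgood δ hδ
    refine ⟨r, hr, hrδ, ?_⟩
    have hmin := min_measure_le_perimeterDensity hP hCP hD hE x (by positivity : 0 < 4 * r)
    rw [show 2 * (4 * r) = 8 * r by ring] at hmin
    have hsmall : 2 * (Cd:ℝ≥0∞) ^ (n + 3) *
        min (μ (E ∩ ball x (4 * r))) (μ (Eᶜ ∩ ball x (4 * r))) ≤ μ (ball x (4 * r)) := by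
      have hconst : 2 * (Cd:ℝ≥0∞) ^ (n + 3) * (ENNReal.ofReal (CP / 2) *
          (2 * (Cd ^ 4 * ENNReal.ofReal c)) * Cd) ≤ 1 := by
        have h2 : (2:ℝ≥0∞) = ENNReal.ofReal 2 := by simp
        rw [← ENNReal.ofReal_coe_nnreal (p := Cd), h2, ← ENNReal.ofReal_one,
          ← ENNReal.ofReal_pow (by positivity), ← ENNReal.ofReal_pow (by positivity),
          ← ENNReal.ofReal_mul (by positivity), ← ENNReal.ofReal_mul (by positivity),
          ← ENNReal.ofReal_mul (by positivity), ← ENNReal.ofReal_mul (by positivity),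
          ← ENNReal.ofReal_mul (by positivity), ← ENNReal.ofReal_mul (by positivity)]
        refine ENNReal.ofReal_le_ofReal (le_trans (le_of_eq ?_) hcn)
        ring
      calc _ ≤ 2 * (Cd:ℝ≥0∞) ^ (n + 3) * (ENNReal.ofReal (CP / 2) *
            (2 * (Cd ^ 4 * ENNReal.ofReal c)) * Cd * μ (ball x (4 * r))) := by
            gcongr
            refine hmin.trans ?_
            gcongr
        _ = 2 * (Cd:ℝ≥0∞) ^ (n + 3) * (ENNReal.ofReal (CP / 2) *
            (2 * (Cd ^ 4 * ENNReal.ofReal c)) * Cd) * μ (ball x (4 * r)) := by ring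
        _ ≤ 1 * μ (ball x (4 * r)) := mul_le_mul_left hconst _
        _ = _ := one_mul _
    rw [mul_min, min_le_iff] at hsmall
    refine hsmall.imp (fun h => ⟨hmt.trans ht, ?_⟩) fun h => ⟨?_, ?_⟩
    · exact ofReal_mul_measure_inter_ball_le hP hCP hD hCd hE hr hn hnC h h4
    · rw [perimeterDensity_compl]
      exact hmt.trans ht
    · refine ofReal_mul_measure_inter_ball_le hP hCP hD hCd hE.compl hr hn hnC h ?_
      rwa [perimeterDensity_compl]
  exact mem_iUnion.2 ⟨m, frequently_or_distrib.1 hfreq⟩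

end LowerBound

theorem statement3 (Cd : ℝ≥0) (CP : ℝ) (hCd : 1 ≤ Cd) (hCP : 0 < CP) :
    ∃ c : ℝ, 0 < c ∧
      ∀ (X : Type u) [MetricSpace X] [MeasurableSpace X] [BorelSpace X]
        (μ : Measure X), GoodSpace X μ Cd CP →
        ∀ E : Set X, NullMeasurableSet E μ →
          totVarOn μ (E.indicator fun _ => (1:ℝ)) Set.univ < ⊤ →
          ∃ N : Set X, N ⊆ measBdry μ E ∧ codimOneH μ N = 0 ∧
            ∀ x ∈ measBdry μ E \ N,
              ENNReal.ofReal c ≤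
                Filter.liminf
                  (fun r : ℝ => ENNReal.ofReal r *
                    totVarOn μ (E.indicator fun _ => (1:ℝ)) (ball x r) / μ (ball x r))
                  (𝓝[>] (0:ℝ)) ∧
              Filter.limsup
                  (fun r : ℝ => ENNReal.ofReal r *
                    totVarOn μ (E.indicator fun _ => (1:ℝ)) (ball x r) / μ (ball x r))
                  (𝓝[>] (0:ℝ)) ≤ (Cd : ℝ≥0∞) := by
  obtain ⟨n₀, hn₀⟩ := pow_unbounded_of_one_lt (16 * (Cd:ℝ) ^ 8 * CP) one_lt_two
  have hn : 16 * (Cd:ℝ) ^ 8 * CP ≤ 2 ^ (n₀ + 1) :=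
    hn₀.le.trans (pow_le_pow_right₀ one_le_two n₀.le_succ)
  have hCd0 : (0:ℝ) < Cd := by exact_mod_cast one_pos.trans_le hCd
  have hK : 0 < 2 * CP * (Cd:ℝ) ^ (n₀ + 1 + 8) := by positivity
  refine ⟨(2 * CP * (Cd:ℝ) ^ (n₀ + 1 + 8))⁻¹, inv_pos.2 hK, ?_⟩
  intro X _ _ _ μ ⟨hX, _, _, hD, hP⟩ E hE hfin
  set c : ℝ := (2 * CP * (Cd:ℝ) ^ (n₀ + 1 + 8))⁻¹ with hc
  have : Nonempty X := hX.to_nonempty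
  refine ⟨{x ∈ measBdry μ E | liminf (perimeterDensity μ E x) (𝓝[>] 0) < ENNReal.ofReal c} ∪
    {x ∈ measBdry μ E | (Cd:ℝ≥0∞) < limsup (perimeterDensity μ E x) (𝓝[>] 0)},
    union_subset (sep_subset _ _) (sep_subset _ _), ?_, fun x hx => ⟨?_, ?_⟩⟩
  · refine codimOneH_union_eq_zero (codimOneH_liminf_perimeterDensity_lt hP hCP hD hCd hE hfin.ne
      n₀.succ_pos hn (inv_pos.2 hK) (mul_inv_cancel₀ hK.ne').le) ?_
    exact le_antisymm ((codimOneH_mono fun x hx => hx.2).trans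
      (codimOneH_lt_limsup_perimeterDensity hD hCd hE hfin.ne).le) bot_le
  · exact not_lt.1 fun h => hx.2 (Or.inl ⟨hx.1, h⟩)
  · exact not_lt.1 fun h => hx.2 (Or.inr ⟨hx.1, h⟩)

end
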